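/- arXiv:2509.04654 — 4 statements merged into one kernel-verified Lean document; each statement's English description precedes it below -/
import Mathlib

section
/- Let (W, r_1, …, r_n) be a Strip Packing instance whose rectangles are listed in the FQW-ordering, and let h_BL be the height of the Bottom-Left packing for this ordering. Then h_BL ≤ (13/6) · h_OPT. -/
open scoped Classical
open MeasureTheory

/-- An axis-parallel rectangle, given by its width and its height. -/
structure Rect where
  w : ℝ
  h : ℝ

/-- A Strip Packing instance: a strip of width `W > 0` and `n` rectangles
`r 0, …, r (n-1)`, each with positive height and width at most `W`. -/
structure SPInstance (n : ℕ) where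
  W : ℝ
  r : Fin n → Rect
  W_pos : 0 < W
  w_pos : ∀ i, 0 < (r i).w
  w_le_W : ∀ i, (r i).w ≤ W
  h_pos : ∀ i, 0 < (r i).h

/-- The open box of rectangle `R` placed at position `p`. -/
def openBox (R : Rect) (p : ℝ × ℝ) : Set (ℝ × ℝ) :=
  Set.Ioo p.1 (p.1 + R.w) ×ˢ Set.Ioo p.2 (p.2 + R.h)

/-- The closed box of rectangle `R` placed at position `p`. -/
def closedBox (R : Rect) (p : ℝ × ℝ) : Set (ℝ × ℝ) :=
  Set.Icc p.1 (p.1 + R.w) ×ˢ Set.Icc p.2 (p.2 + R.h)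

namespace SPInstance

variable {n : ℕ}

/-- Rectangle `i` placed at `p` lies inside the strip. -/
def InStrip (I : SPInstance n) (i : Fin n) (p : ℝ × ℝ) : Prop :=
  0 ≤ p.1 ∧ p.1 + (I.r i).w ≤ I.W ∧ 0 ≤ p.2

/-- `pos` is a feasible packing: each rectangle lies in the strip and the open
boxes are pairwise disjoint. -/
def Feasible (I : SPInstance n) (pos : Fin n → ℝ × ℝ) : Prop :=
  (∀ i, I.InStrip i (pos i)) ∧
    Pairwise (fun i j : Fin n =>
      Disjoint (openBox (I.r i) (pos i)) (openBox (I.r j) (pos j)))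

/-- The height of a packing, `max_i (y_i + h_i)`. -/
noncomputable def height (I : SPInstance n) (pos : Fin n → ℝ × ℝ) : ℝ :=
  ⨆ i, ((pos i).2 + (I.r i).h)

/-- The minimum height of a feasible packing. -/
noncomputable def hOPT (I : SPInstance n) : ℝ :=
  sInf {H | ∃ pos, I.Feasible pos ∧ I.height pos = H}

/-- The maximum height of a rectangle of the instance. -/
noncomputable def hmax (I : SPInstance n) : ℝ :=
  ⨆ i, (I.r i).h

/-- Rectangle `i` can feasibly be placed at `p`, given the rectangles
`j < i` already placed at `pos j`. -/
def FeasibleAt (I : SPInstance n) (pos : Fin n → ℝ × ℝ) (i : Fin n) (p : ℝ × ℝ) : Prop :=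
  I.InStrip i p ∧ ∀ j : Fin n, j < i →
    Disjoint (openBox (I.r i) p) (openBox (I.r j) (pos j))

/-- `pos` is the Bottom-Left packing for the ordering `r 0, r 1, …`: every
rectangle is feasibly placed, at the lexicographically minimal `(y, x)`. -/
def IsBL (I : SPInstance n) (pos : Fin n → ℝ × ℝ) : Prop :=
  ∀ i : Fin n, I.FeasibleAt pos i (pos i) ∧
    ∀ p : ℝ × ℝ, I.FeasibleAt pos i p →
      (pos i).2 < p.2 ∨ ((pos i).2 = p.2 ∧ (pos i).1 ≤ p.1)

/-- Greedy construction of the set `F` of the FQW-partition, processing the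
rectangles in the order `σ 0, σ 1, …` and adding a rectangle whenever the
total width of `F` stays at most `W`. -/
noncomputable def greedyF (I : SPInstance n) (σ : Equiv.Perm (Fin n)) : Finset (Fin n) :=
  (List.finRange n).foldl
    (fun F k =>
      if (I.r (σ k)).w + ∑ f ∈ F, (I.r f).w ≤ I.W then insert (σ k) F else F) ∅

end SPInstance

/-- An FQW-partition datum: a processing order `σ` of the rectangles that is
sorted by decreasing height. -/
structure FQW {n : ℕ} (I : SPInstance n) where
  σ : Equiv.Perm (Fin n)
  sorted : ∀ k k' : Fin n, k ≤ k' → (I.r (σ k')).h ≤ (I.r (σ k)).h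

namespace FQW

variable {n : ℕ} {I : SPInstance n}

/-- The set `F` of the FQW-partition. -/
noncomputable def F (d : FQW I) : Finset (Fin n) := I.greedyF d.σ

/-- The set `𝒲` of the FQW-partition: rectangles not in `F` of width
greater than `W/2`. -/
noncomputable def Wset (d : FQW I) : Finset (Fin n) :=
  Finset.univ.filter fun i => i ∉ d.F ∧ I.W / 2 < (I.r i).w

/-- The set `Q` of the FQW-partition: all remaining rectangles. -/
noncomputable def Q (d : FQW I) : Finset (Fin n) :=
  Finset.univ.filter fun i => i ∉ d.F ∧ ¬ I.W / 2 < (I.r i).w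

/-- The rectangles of the instance are listed in the FQW-ordering: first `F`
sorted by decreasing height, then `Q` sorted by decreasing width, then `𝒲`. -/
def IsOrdered (d : FQW I) : Prop :=
  (∀ i : Fin n, i ∈ d.F ↔ (i : ℕ) < d.F.card) ∧
  (∀ i : Fin n, i ∈ d.Q ↔ d.F.card ≤ (i : ℕ) ∧ (i : ℕ) < d.F.card + d.Q.card) ∧
  (∀ i j : Fin n, (i : ℕ) ≤ (j : ℕ) → (j : ℕ) < d.F.card → (I.r j).h ≤ (I.r i).h) ∧
  (∀ i j : Fin n, d.F.card ≤ (i : ℕ) → (i : ℕ) ≤ (j : ℕ) →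
    (j : ℕ) < d.F.card + d.Q.card → (I.r j).w ≤ (I.r i).w)

end FQW

/-- `max {y_{r_1}, …, y_{r_i}}` (the first `i` rectangles, `0` if `i = 0`):
the lower boundary of the region `H_{i+1}` of the horizontal strip partition. -/
noncomputable def maxYBelow {n : ℕ} (pos : Fin n → ℝ × ℝ) (i : ℕ) : ℝ :=
  ⨆ j : {j : Fin n // (j : ℕ) < i}, (pos (j : Fin n)).2

namespace SPInstance

variable {n : ℕ}

/-- The horizontal line at height `t` is proper: it meets no top or
bottom face of a rectangle. -/
def ProperLine (I : SPInstance n) (pos : Fin n → ℝ × ℝ) (t : ℝ) : Prop :=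
  ∀ j : Fin n, t ≠ (pos j).2 ∧ t ≠ (pos j).2 + (I.r j).h

/-- Rectangle `j` intersects the horizontal line at height `t`. -/
def Intersects (I : SPInstance n) (pos : Fin n → ℝ × ℝ) (j : Fin n) (t : ℝ) : Prop :=
  (pos j).2 < t ∧ t < (pos j).2 + (I.r j).h

/-- The occupied part of the horizontal line at height `t`. -/
noncomputable def occupied (I : SPInstance n) (pos : Fin n → ℝ × ℝ) (t : ℝ) : Set ℝ :=
  ⋃ j ∈ {j : Fin n | I.Intersects pos j t}, Set.Icc (pos j).1 ((pos j).1 + (I.r j).w)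

/-- The occupied fraction of the horizontal line at height `t`. -/
noncomputable def occFrac (I : SPInstance n) (pos : Fin n → ℝ × ℝ) (t : ℝ) : ℝ :=
  (volume (I.occupied pos t)).toReal / I.W

/-- The region `H_{i+1}` (for the `0`-based index `i`) of the horizontal strip
partition: `[0, W] × [max {y_{r_1}, …, y_{r_i}}, y_{r_{i+1}})`. -/
def regionH (I : SPInstance n) (pos : Fin n → ℝ × ℝ) (i : Fin n) : Set (ℝ × ℝ) :=
  Set.Icc 0 I.W ×ˢ Set.Ico (maxYBelow pos (i : ℕ)) (pos i).2

/-- `G` is an unoccupied gap of the horizontal line at height `t`: a maximal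
subinterval of `[0, W]` disjoint from the occupied part of the line. -/
def IsGap (I : SPInstance n) (pos : Fin n → ℝ × ℝ) (t : ℝ) (G : Set ℝ) : Prop :=
  G.Nonempty ∧ G ⊆ Set.Icc 0 I.W ∧ G.OrdConnected ∧ Disjoint G (I.occupied pos t) ∧
    ∀ G' : Set ℝ, G'.OrdConnected → G' ⊆ Set.Icc 0 I.W →
      Disjoint G' (I.occupied pos t) → G ⊆ G' → G' = G

/-- `j` is a left supporter of `i`: it comes before `i` in the ordering, its
right face touches the left face of `i`, and their open `y`-ranges intersect. -/
def IsLeftSupporter (I : SPInstance n) (pos : Fin n → ℝ × ℝ) (i j : Fin n) : Prop :=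
  j < i ∧ (pos j).1 + (I.r j).w = (pos i).1 ∧
    (pos j).2 < (pos i).2 + (I.r i).h ∧ (pos i).2 < (pos j).2 + (I.r j).h

/-- `j` is a bottom supporter of `i`: it comes before `i` in the ordering, its
top face touches the bottom face of `i`, and their open `x`-ranges intersect. -/
def IsBottomSupporter (I : SPInstance n) (pos : Fin n → ℝ × ℝ) (i j : Fin n) : Prop :=
  j < i ∧ (pos j).2 + (I.r j).h = (pos i).2 ∧
    (pos j).1 < (pos i).1 + (I.r i).w ∧ (pos i).1 < (pos j).1 + (I.r j).w

/-- `j` is the leftmost bottom supporter of `i`. -/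
def IsLeftmostBottomSupporter (I : SPInstance n) (pos : Fin n → ℝ × ℝ)
    (i j : Fin n) : Prop :=
  I.IsBottomSupporter pos i j ∧
    ∀ j' : Fin n, I.IsBottomSupporter pos i j' → (pos j).1 ≤ (pos j').1

end SPInstance

/-- `iT` is the top rectangle `r_T` of `Q`: the rectangle of `Q` whose top face
is highest, ties broken by highest bottom face. -/
def IsTopRect {n : ℕ} (I : SPInstance n) (d : FQW I) (pos : Fin n → ℝ × ℝ)
    (iT : Fin n) : Prop :=
  iT ∈ d.Q ∧ ∀ j ∈ d.Q,
    (pos j).2 + (I.r j).h < (pos iT).2 + (I.r iT).h ∨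
    ((pos j).2 + (I.r j).h = (pos iT).2 + (I.r iT).h ∧ (pos j).2 ≤ (pos iT).2)

/-- `iL` is the left rectangle `r_L` of `Q`: the first rectangle of `Q` in the
ordering touching the left strip boundary, and `r_T` if there is none. -/
def IsLeftRect {n : ℕ} (I : SPInstance n) (d : FQW I) (pos : Fin n → ℝ × ℝ)
    (iT iL : Fin n) : Prop :=
  (iL ∈ d.Q ∧ (pos iL).1 = 0 ∧ ∀ j ∈ d.Q, (pos j).1 = 0 → iL ≤ j) ∨
  ((∀ j ∈ d.Q, (pos j).1 ≠ 0) ∧ iL = iT)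

/-- The region `H' = [0, W] × ([0, h_{r_T}] ∪ [y_{r_T}, y_{r_T} + h_{r_T}])`. -/
def Hprime {n : ℕ} (I : SPInstance n) (pos : Fin n → ℝ × ℝ) (iT : Fin n) :
    Set (ℝ × ℝ) :=
  Set.Icc 0 I.W ×ˢ
    (Set.Icc 0 (I.r iT).h ∪ Set.Icc (pos iT).2 ((pos iT).2 + (I.r iT).h))

/-- The type `T(ℓ)` of the proper horizontal line at height `t`: the rectangles
of `Q` intersecting the line whose index is smaller than the least index `j`
with `y_{r_j} > t` (equivalently, all rectangles with index at most theirs have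
bottom face at height at most `t`). -/
noncomputable def TypeOf {n : ℕ} (I : SPInstance n) (d : FQW I)
    (pos : Fin n → ℝ × ℝ) (t : ℝ) : Finset (Fin n) :=
  Finset.univ.filter fun i =>
    i ∈ d.Q ∧ I.Intersects pos i t ∧ ∀ j : Fin n, j ≤ i → (pos j).2 ≤ t

/-- `i` is `LM(ℓ)`: the rectangle of `T(ℓ)` with smallest `x`-coordinate. -/
def IsLM {n : ℕ} (I : SPInstance n) (d : FQW I) (pos : Fin n → ℝ × ℝ) (t : ℝ)
    (i : Fin n) : Prop :=
  i ∈ TypeOf I d pos t ∧ ∀ j ∈ TypeOf I d pos t, (pos i).1 ≤ (pos j).1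

/-- The horizontal line at height `t` lies in `H_{a+2} ∪ ⋯ ∪ H_L`, where `iL`
is the `0`-based index of `r_L` (so `L = iL + 1`, `1`-based). -/
def LineInHUnion {n : ℕ} (I : SPInstance n) (d : FQW I) (pos : Fin n → ℝ × ℝ)
    (iL : Fin n) (t : ℝ) : Prop :=
  ∃ m : Fin n, d.F.card + 1 ≤ (m : ℕ) ∧ m ≤ iL ∧
    maxYBelow pos (m : ℕ) ≤ t ∧ t < (pos m).2

/-- The space `H_{a+2} ∪ ⋯ ∪ H_L`, where `iL` is the `0`-based index of `r_L`. -/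
def regionHUnion {n : ℕ} (I : SPInstance n) (d : FQW I) (pos : Fin n → ℝ × ℝ)
    (iL : Fin n) : Set (ℝ × ℝ) :=
  ⋃ m ∈ {m : Fin n | d.F.card + 1 ≤ (m : ℕ) ∧ m ≤ iL}, I.regionH pos m

/-- The horizontal line at height `t` belongs to `L^k`: it is a proper line of
order `k` lying in `H_{a+2} ∪ ⋯ ∪ H_L`. -/
def InLk {n : ℕ} (I : SPInstance n) (d : FQW I) (pos : Fin n → ℝ × ℝ)
    (iL : Fin n) (k : ℕ) (t : ℝ) : Prop :=
  I.ProperLine pos t ∧ LineInHUnion I d pos iL t ∧ (TypeOf I d pos t).card = k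

/-- `i` belongs to `R^k`: it is `LM(ℓ)` for some line `ℓ ∈ L^k`. -/
def InRk {n : ℕ} (I : SPInstance n) (d : FQW I) (pos : Fin n → ℝ × ℝ)
    (iL : Fin n) (k : ℕ) (i : Fin n) : Prop :=
  ∃ t : ℝ, InLk I d pos iL k t ∧ IsLM I d pos t i

/-- `i` is `LM^k`: the rectangle of `R^k` with smallest `x`-coordinate,
ties broken by largest `y`-coordinate. -/
def IsLMk {n : ℕ} (I : SPInstance n) (d : FQW I) (pos : Fin n → ℝ × ℝ)
    (iL : Fin n) (k : ℕ) (i : Fin n) : Prop :=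
  InRk I d pos iL k i ∧ ∀ j : Fin n, InRk I d pos iL k j →
    (pos i).1 < (pos j).1 ∨ ((pos i).1 = (pos j).1 ∧ (pos j).2 ≤ (pos i).2)

/-- `v = x_F^ℓ` for the line `ℓ` at height `t`: the right face `x + w` of the
rightmost rectangle of `F` intersecting `ℓ`, and `0` if there is none. -/
def IsXF {n : ℕ} (I : SPInstance n) (d : FQW I) (pos : Fin n → ℝ × ℝ)
    (t v : ℝ) : Prop :=
  ((∃ f ∈ d.F, I.Intersects pos f t ∧ v = (pos f).1 + (I.r f).w) ∧
    ∀ f ∈ d.F, I.Intersects pos f t → (pos f).1 + (I.r f).w ≤ v) ∨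
  ((∀ f ∈ d.F, ¬ I.Intersects pos f t) ∧ v = 0)



/-! ### Numeric core of the proof -/

/-- Two boxes are separated. -/
def BoxSep (x1 w1 y1 h1 x2 w2 y2 h2 : ℝ) : Prop :=
  x1 + w1 ≤ x2 ∨ x2 + w2 ≤ x1 ∨ y1 + h1 ≤ y2 ∨ y2 + h2 ≤ y1

/-- A feasible packing, with coordinates as plain functions. -/
structure Pk {n : ℕ} (W : ℝ) (w h x y : Fin n → ℝ) : Prop where
  wpos : ∀ i, 0 < w i
  hpos : ∀ i, 0 < h i
  x0 : ∀ i, 0 ≤ x i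
  xW : ∀ i, x i + w i ≤ W
  y0 : ∀ i, 0 ≤ y i
  sep : ∀ i j, i ≠ j → BoxSep (x i) (w i) (y i) (h i) (x j) (w j) (y j) (h j)

/-- Pairwise disjoint intervals inside `[0, W]` have total length at most `W`. -/
lemma sum_le_of_disjoint_intervals {ι : Type*} (S : Finset ι) (x w : ι → ℝ) (W : ℝ) (hW : 0 ≤ W)
    (w0 : ∀ i ∈ S, 0 ≤ w i)
    (x0 : ∀ i ∈ S, 0 ≤ x i) (xW : ∀ i ∈ S, x i + w i ≤ W)
    (hd : ∀ i ∈ S, ∀ j ∈ S, i ≠ j → x i + w i ≤ x j ∨ x j + w j ≤ x i) :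
    ∑ i ∈ S, w i ≤ W := by
  have h1 : volume (⋃ i ∈ S, Set.Ioo (x i) (x i + w i)) =
      ∑ i ∈ S, volume (Set.Ioo (x i) (x i + w i)) := by
    apply measure_biUnion_finset
    · intro i hi j hj hij
      rw [Function.onFun, Set.disjoint_left]
      intro z hz hz'
      rcases hd i hi j hj hij with h | h
      · linarith [hz.2, hz'.1]
      · linarith [hz.1, hz'.2]
    · intro i _; exact measurableSet_Ioo
  have h2 : volume (⋃ i ∈ S, Set.Ioo (x i) (x i + w i)) ≤ volume (Set.Icc 0 W) := by
    apply measure_mono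
    intro z hz
    simp only [Set.mem_iUnion] at hz
    obtain ⟨i, hi, hz⟩ := hz
    exact ⟨by linarith [x0 i hi, hz.1], by linarith [xW i hi, hz.2]⟩
  rw [h1] at h2
  simp only [Real.volume_Ioo, Real.volume_Icc, add_sub_cancel_left, sub_zero] at h2
  rw [← ENNReal.ofReal_sum_of_nonneg w0] at h2
  exact (ENNReal.ofReal_le_ofReal_iff hW).1 h2

lemma length_le_of_cover {ι : Type*} (S : Finset ι) (x w : ι → ℝ) (a b : ℝ)
    (w0 : ∀ i ∈ S, 0 ≤ w i)
    (hc : ∀ z, a < z → z < b → ∃ i ∈ S, x i ≤ z ∧ z ≤ x i + w i) :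
    b - a ≤ ∑ i ∈ S, w i := by
  have h2 : volume (Set.Ioo a b) ≤ volume (⋃ i ∈ S, Set.Icc (x i) (x i + w i)) := by
    apply measure_mono
    intro z hz
    obtain ⟨i, hi, h⟩ := hc z hz.1 hz.2
    simp only [Set.mem_iUnion]
    exact ⟨i, hi, h⟩
  have h3 := h2.trans (measure_biUnion_finset_le S _)
  simp only [Real.volume_Ioo, Real.volume_Icc, add_sub_cancel_left] at h3
  rw [← ENNReal.ofReal_sum_of_nonneg w0] at h3
  exact (ENNReal.ofReal_le_ofReal_iff (Finset.sum_nonneg w0)).1 h3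

lemma Pk.line_le {n : ℕ} {W : ℝ} {w h x y : Fin n → ℝ} (P : Pk W w h x y) (hW : 0 ≤ W)
    (S : Finset (Fin n)) (t : ℝ) (hS : ∀ i ∈ S, y i < t ∧ t < y i + h i) :
    ∑ i ∈ S, w i ≤ W := by
  apply sum_le_of_disjoint_intervals S x w W hW (fun i _ => (P.wpos i).le) (fun i _ => P.x0 i)
    (fun i _ => P.xW i)
  intro i hi j hj hij
  have a := hS i hi
  have b := hS j hj
  rcases P.sep i j hij with h | h | h | h
  · exact Or.inl h
  · exact Or.inr h
  · linarith
  · linarith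

/-- Prefix widths. -/
noncomputable def prefW {n : ℕ} (w : Fin n → ℝ) (k : ℕ) : ℝ :=
  ∑ i ∈ Finset.univ.filter (fun i : Fin n => (i : ℕ) < k), w i

lemma filter_lt_succ {n : ℕ} (k : ℕ) (hk : k < n) :
    Finset.univ.filter (fun i : Fin n => (i : ℕ) < k + 1) =
      insert (⟨k, hk⟩ : Fin n) (Finset.univ.filter (fun i : Fin n => (i : ℕ) < k)) := by
  ext i
  simp [Fin.ext_iff]
  omega

lemma prefW_zero {n : ℕ} (w : Fin n → ℝ) : prefW w 0 = 0 := by simp [prefW]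

lemma prefW_succ {n : ℕ} (w : Fin n → ℝ) (i : Fin n) :
    prefW w (i + 1) = prefW w i + w i := by
  unfold prefW
  rw [filter_lt_succ _ i.2, Finset.sum_insert (by simp)]
  simp [add_comm]

lemma prefW_locate {n : ℕ} (w : Fin n → ℝ) (c : ℕ) (hc : c ≤ n) (z : ℝ) (hz : 0 ≤ z)
    (hz' : z < prefW w c) :
    ∃ i : Fin n, (i : ℕ) < c ∧ prefW w i ≤ z ∧ z < prefW w i + w i := by
  induction c with
  | zero => rw [prefW_zero] at hz'; linarith
  | succ c ih =>
    by_cases h : z < prefW w c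
    · obtain ⟨i, hi, h⟩ := ih (by omega) h
      exact ⟨i, by omega, h⟩
    · refine ⟨⟨c, hc⟩, by simp, not_lt.1 h, ?_⟩
      rw [← prefW_succ]; exact hz'

lemma prefW_mono {n : ℕ} (w : Fin n → ℝ) (w0 : ∀ i, 0 < w i) {a b : ℕ} (hab : a ≤ b) :
    prefW w a ≤ prefW w b := by
  apply Finset.sum_le_sum_of_subset_of_nonneg
  · intro i; simp; omega
  · intro i _ _; exact (w0 i).le

/-- Telescoping. -/
lemma prefW_tele {n : ℕ} (w : Fin n → ℝ) (ψ : ℝ → ℝ) (c : ℕ) (hc : c ≤ n) :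
    ∑ i ∈ Finset.univ.filter (fun i : Fin n => (i : ℕ) < c),
      (ψ (prefW w i + w i) - ψ (prefW w i)) = ψ (prefW w c) - ψ 0 := by
  induction c with
  | zero => simp [prefW_zero]
  | succ c ih =>
    rw [filter_lt_succ c hc, Finset.sum_insert (by simp), ih (by omega)]
    have := prefW_succ w ⟨c, hc⟩
    simp only at this
    rw [this]
    ring

/-- Everything about a Bottom-Left packing and the ordering that is used below. `a` is the number
of rectangles of `F` and `b` the number of rectangles of `F ∪ Q`. -/
structure BLD {n : ℕ} (W : ℝ) (w h x y : Fin n → ℝ) (a b : ℕ) : Prop extends Pk W w h x y where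
  Wpos : 0 < W
  bl : ∀ i px py, 0 ≤ px → px + w i ≤ W → 0 ≤ py →
    (∀ j, j < i → BoxSep px (w i) py (h i) (x j) (w j) (y j) (h j)) →
    y i < py ∨ (y i = py ∧ x i ≤ px)
  an : a ≤ n
  ab : a ≤ b
  sumF : prefW w a ≤ W
  hF : ∀ i j : Fin n, i ≤ j → (j : ℕ) < a → h j ≤ h i
  wQ : ∀ i j : Fin n, a ≤ (i : ℕ) → i ≤ j → (j : ℕ) < b → w j ≤ w i
  halfQ : ∀ i : Fin n, a ≤ (i : ℕ) → (i : ℕ) < b → w i ≤ W / 2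
  halfW : ∀ i : Fin n, b ≤ (i : ℕ) → W / 2 < w i
  greedy : ∀ i : Fin n, a ≤ (i : ℕ) →
    W < w i + ∑ f ∈ Finset.univ.filter (fun f : Fin n => (f : ℕ) < a ∧ h i ≤ h f), w f

section Core

variable {n : ℕ} {W : ℝ} {w h x y : Fin n → ℝ} {a b : ℕ}

lemma BLD.posF (D : BLD W w h x y a b) (i : Fin n) (hi : (i : ℕ) < a) :
    y i = 0 ∧ x i = prefW w i := by
  obtain ⟨k, hk⟩ := i
  induction k using Nat.strong_induction_on with
  | _ k ih =>
  simp only at hi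
  have ih' : ∀ j : Fin n, (j : ℕ) < k → y j = 0 ∧ x j = prefW w j := by
    intro j hj; exact ih j hj j.2 (by simp; omega)
  have hs := prefW_succ w ⟨k, hk⟩
  have hm := prefW_mono w D.wpos (show k + 1 ≤ a by omega)
  have h0 := prefW_mono w D.wpos (show 0 ≤ k by omega)
  rw [prefW_zero] at h0
  simp only at hs
  have key := D.bl ⟨k, hk⟩ (prefW w k) 0 h0 (by linarith [D.sumF]) le_rfl (by
    intro j hj
    have hj' : (j : ℕ) < k := hj
    obtain ⟨_, h2⟩ := ih' j hj'
    have := prefW_mono w D.wpos (show (j : ℕ) + 1 ≤ k by omega)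
    rw [prefW_succ] at this
    right; left; linarith)
  have y0 := D.y0 ⟨k, hk⟩
  rcases key with h1 | ⟨h1, h2⟩
  · linarith
  · refine ⟨h1, ?_⟩
    simp only
    by_contra hne
    have hlt : x ⟨k, hk⟩ < prefW w k := lt_of_le_of_ne h2 hne
    obtain ⟨j, hj, hj1, hj2⟩ := prefW_locate w k hk.le _ (D.x0 ⟨k, hk⟩) hlt
    obtain ⟨e1, e2⟩ := ih' j hj
    have hw := D.wpos ⟨k, hk⟩
    have p1 := D.hpos ⟨k, hk⟩
    have p2 := D.hpos j
    rcases D.sep ⟨k, hk⟩ j (by intro e; rw [← e] at hj; simp at hj) with s | s | s | s <;> linarith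

/-- Left supporter. -/
lemma BLD.leftSupp (D : BLD W w h x y a b) (q : Fin n) (hq : 0 < x q) :
    ∃ j, j < q ∧ x j + w j = x q ∧ y j < y q + h q ∧ y q < y j + h j := by
  by_contra hcon
  push Not at hcon
  set S := Finset.univ.filter (fun j : Fin n => j < q ∧ x j + w j ≤ x q ∧ y j < y q + h q ∧
    y q < y j + h j) with hS
  have : ∃ c, 0 ≤ c ∧ c < x q ∧ ∀ j ∈ S, x j + w j ≤ c := by
    rcases S.eq_empty_or_nonempty with hE | hE
    · exact ⟨0, le_rfl, hq, by simp [hE]⟩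
    · obtain ⟨j, hj, hmax⟩ := S.exists_max_image (fun j => x j + w j) hE
      refine ⟨x j + w j, by linarith [D.x0 j, D.wpos j], ?_, hmax⟩
      simp only [hS, Finset.mem_filter] at hj
      obtain ⟨-, h1, h2, h3, h4⟩ := hj
      refine lt_of_le_of_ne h2 fun e => ?_
      linarith [hcon j h1 e h3]
  obtain ⟨c, hc0, hc1, hc2⟩ := this
  have key := D.bl q c (y q) hc0 (by linarith [D.xW q]) (D.y0 q) (by
    intro j hj
    have hs := D.sep q j hj.ne'
    unfold BoxSep
    rcases hs with s | s | s | s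
    · left; linarith
    · by_cases h1 : y j < y q + h q
      · by_cases h2 : y q < y j + h j
        · right; left; exact hc2 j (by simp [hS]; exact ⟨hj, s, h1, h2⟩)
        · right; right; right; linarith
      · right; right; left; linarith
    · right; right; left; exact s
    · right; right; right; exact s)
  rcases key with k | k
  · linarith
  · linarith [k.2]

/-- The window lemma: `r_m` cannot be placed on a lower line. -/
lemma BLD.window (D : BLD W w h x y a b) (m : Fin n) (t : ℝ) (t0 : 0 ≤ t) (tm : t < y m)
    (low : ∀ j, j < m → y j ≤ t) (gen : ∀ j, t ≠ y j) (z : ℝ) (z0 : 0 ≤ z) (zW : z + w m ≤ W) :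
    ∃ j, j < m ∧ y j < t ∧ t < y j + h j ∧ x j < z + w m ∧ z < x j + w j := by
  by_contra hcon
  push Not at hcon
  have key := D.bl m z t z0 zW t0 (by
    intro j hj
    unfold BoxSep
    by_contra hs
    push Not at hs
    have h1 : y j < t := lt_of_le_of_ne (low j hj) (gen j).symm
    linarith [hcon j hj h1 hs.2.2.2 hs.1])
  rcases key with k | k
  · linarith
  · linarith [k.1]

/-- The correction term. -/
noncomputable def bumpP (W : ℝ) {n : ℕ} (w : Fin n → ℝ) (i : Fin n) : ℝ :=
  min (prefW w i + w i) (W / 3) - min (prefW w i) (W / 3)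

noncomputable def bumpFn (W H : ℝ) {n : ℕ} (w h : Fin n → ℝ) (a : ℕ) (t : ℝ) : ℝ :=
  ∑ i ∈ Finset.univ.filter (fun i : Fin n => (i : ℕ) < a),
    (Set.Ioo (h i) (h i + H / 2)).indicator (fun _ => bumpP W w i) t

noncomputable def occFn {n : ℕ} (w h y : Fin n → ℝ) (t : ℝ) : ℝ :=
  ∑ i, (Set.Ioo (y i) (y i + h i)).indicator (fun _ => w i) t

lemma bumpP_nonneg (hw : ∀ i, 0 < w i) (i : Fin n) : 0 ≤ bumpP W w i := by
  unfold bumpP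
  have := min_le_min_right (W / 3) (show prefW w i ≤ prefW w i + w i by linarith [hw i])
  linarith

lemma bumpFn_nonneg (H : ℝ) (hw : ∀ i, 0 < w i) (t : ℝ) : 0 ≤ bumpFn W H w h a t := by
  apply Finset.sum_nonneg
  intro i _
  exact Set.indicator_nonneg (fun _ _ => bumpP_nonneg hw i) _

lemma occFn_ge (hw : ∀ i, 0 < w i) (t : ℝ) (S : Finset (Fin n))
    (hS : ∀ i ∈ S, y i < t ∧ t < y i + h i) : ∑ i ∈ S, w i ≤ occFn w h y t := by
  have : ∑ i ∈ S, w i = ∑ i ∈ S, (Set.Ioo (y i) (y i + h i)).indicator (fun _ => w i) t := by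
    apply Finset.sum_congr rfl
    intro i hi
    rw [Set.indicator_of_mem (show t ∈ Set.Ioo (y i) (y i + h i) from hS i hi)]
  rw [this]
  apply Finset.sum_le_sum_of_subset_of_nonneg (Finset.subset_univ _)
  intro i _ _
  exact Set.indicator_nonneg (fun _ _ => (hw i).le) _

lemma exists_prefix (a : ℕ) (h : Fin n → ℝ) (t : ℝ)
    (hF : ∀ i j : Fin n, i ≤ j → (j : ℕ) < a → h j ≤ h i) :
    ∃ c ≤ a, ∀ i : Fin n, ((i : ℕ) < a ∧ t < h i) ↔ (i : ℕ) < c := by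
  have hex : ∃ c, ∀ i : Fin n, (i : ℕ) < a → t < h i → (i : ℕ) < c := ⟨a, fun i hi _ => hi⟩
  refine ⟨Nat.find hex, Nat.find_min' hex (fun i hi _ => hi), fun i => ⟨fun hi =>
    Nat.find_spec hex i hi.1 hi.2, fun hi => ?_⟩⟩
  have := Nat.find_min hex hi
  push Not at this
  obtain ⟨j, h1, h2, h3⟩ := this
  exact ⟨by omega, lt_of_lt_of_le h2 (hF i j h3 h1)⟩

/-- The main pointwise estimate. -/
lemma BLD.pointwise (D : BLD W w h x y a b) (H : ℝ) (hH : ∀ i : Fin n, a ≤ (i : ℕ) → h i ≤ H / 2)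
    (m : Fin n) (ma : a ≤ (m : ℕ)) (mb : (m : ℕ) < b) (t : ℝ) (t0 : 0 < t) (tm : t < y m)
    (low : ∀ j, j < m → y j ≤ t) (gen : ∀ j, t ≠ y j) (gen' : ∀ j, t ≠ y j + h j) :
    W - 2 * occFn w h y t ≤ bumpFn W H w h a t := by
  have win := D.window m t t0.le tm low gen
  obtain ⟨c, hca, hc⟩ := exists_prefix a h t D.hF
  have hcn : c ≤ n := hca.trans D.an
  set X := prefW w c with hX
  have X0 : 0 ≤ X := by have := prefW_mono w D.wpos (Nat.zero_le c); rwa [prefW_zero] at this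
  have bn := bumpFn_nonneg (W := W) (h := h) (a := a) H D.wpos t
  -- rectangles of F crossing the line
  have Fc : ∀ i : Fin n, (i : ℕ) < c → y i < t ∧ t < y i + h i ∧ x i = prefW w i ∧
      x i + w i ≤ X := by
    intro i hi
    have h1 := (hc i).2 hi
    obtain ⟨e1, e2⟩ := D.posF i h1.1
    refine ⟨by linarith, by linarith, e2, ?_⟩
    rw [e2, ← prefW_succ]; exact prefW_mono w D.wpos hi
  have Fc' : ∀ i : Fin n, (i : ℕ) < a → t < y i + h i → (i : ℕ) < c := by
    intro i hi ht
    obtain ⟨e1, -⟩ := D.posF i hi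
    exact (hc i).1 ⟨hi, by linarith⟩
  set S := Finset.univ.filter (fun j : Fin n => j < m ∧ a ≤ (j : ℕ) ∧ y j < t ∧ t < y j + h j)
    with hS
  have memS : ∀ j, j ∈ S ↔ (j < m ∧ a ≤ (j : ℕ) ∧ y j < t ∧ t < y j + h j) := by
    intro j; simp [hS]
  set σ := ∑ i ∈ S, w i with hσ
  have Sw : ∀ j ∈ S, w m ≤ w j := by
    intro j hj; rw [memS] at hj
    exact D.wQ j m hj.2.1 hj.1.le mb
  have Sx : ∀ j ∈ S, X ≤ x j := by
    intro j hj
    rw [memS] at hj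
    by_contra hlt
    obtain ⟨i, hi, hi1, hi2⟩ := prefW_locate w c hcn _ (D.x0 j) (not_le.1 hlt)
    obtain ⟨f1, f2, f3, f4⟩ := Fc i hi
    have := D.wpos j
    rcases D.sep i j (by intro e; rw [e] at hi; omega) with s | s | s | s <;> linarith
  have occ : X + σ ≤ occFn w h y t := by
    have hdis : Disjoint (Finset.univ.filter (fun i : Fin n => (i : ℕ) < c)) S := by
      rw [Finset.disjoint_left]
      intro i hi hi'
      rw [memS] at hi'
      simp at hi
      omega
    have := occFn_ge (y := y) (h := h) D.wpos t
      (Finset.univ.filter (fun i : Fin n => (i : ℕ) < c) ∪ S) (by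
        intro i hi
        rw [Finset.mem_union] at hi
        rcases hi with hi | hi
        · simp at hi; exact ⟨(Fc i hi).1, (Fc i hi).2.1⟩
        · rw [memS] at hi; exact hi.2.2)
    rw [Finset.sum_union hdis] at this
    exact this
  have win' : ∀ z, 0 ≤ z → z + w m ≤ W → z < X ∨ ∃ j ∈ S, x j < z + w m ∧ z < x j + w j := by
    intro z z0 zW
    obtain ⟨j, j1, j2, j3, j4, j5⟩ := win z z0 zW
    by_cases hj : (j : ℕ) < a
    · left; exact lt_of_lt_of_le j5 (Fc j (Fc' j hj j3)).2.2.2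
    · right; exact ⟨j, (memS j).2 ⟨j1, by omega, j2, j3⟩, j4, j5⟩
  have mhalf := D.halfQ m ma mb
  have mpos := D.wpos m
  have mW := D.xW m
  have mx := D.x0 m
  rcases S.eq_empty_or_nonempty with hE | hE
  · rcases win' (W - w m) (by linarith) (by linarith) with h1 | ⟨j, hj, -⟩
    · have : σ = 0 := by rw [hσ, hE]; simp
      linarith
    · rw [hE] at hj; simp at hj
  obtain ⟨q, hq, qmin⟩ := S.exists_min_image x hE
  have hqX := Sx q hq
  have hqw := Sw q hq
  have hqσ : w q ≤ σ := Finset.single_le_sum (f := w) (fun i _ => (D.wpos i).le) hq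
  have hqS := (memS q).1 hq
  have gap : x q < X + w m := by
    by_contra hge
    have hge := not_lt.1 hge
    rcases win' X X0 (by linarith [D.xW q, D.wpos q]) with h1 | ⟨j, hj, h1, h2⟩
    · linarith
    · linarith [qmin j hj]
  have cover : W - x q ≤ ∑ i ∈ S, 2 * w i := by
    apply length_le_of_cover S x
    · intro i _; linarith [D.wpos i]
    · intro z hz1 hz2
      by_cases hzq : z ≤ x q + 2 * w q
      · exact ⟨q, hq, hz1.le, hzq⟩
      · rcases win' (z - w m) (by linarith [D.x0 q]) (by linarith) with h1 | ⟨j, hj, h1, h2⟩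
        · linarith
        · exact ⟨j, hj, by linarith, by linarith [Sw j hj]⟩
  rw [← Finset.mul_sum] at cover
  have d1 : W - 2 * occFn w h y t ≤ x q - 2 * X := by linarith
  have d2 : 3 * (W - 2 * occFn w h y t) ≤ W - 4 * X := by linarith
  by_cases hg : x q ≤ X
  · linarith
  push Not at hg
  obtain ⟨s, s1, s2, s3, s4⟩ := D.leftSupp q (by linarith)
  have sm : s < m := s1.trans hqS.1
  have stopLow : y s + h s < t := by
    by_contra hge
    have h1 : t < y s + h s := lt_of_le_of_ne (not_lt.1 hge) (gen' s)
    have h2 : y s < t := lt_of_le_of_ne (low s sm) (gen s).symm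
    by_cases hsa : (s : ℕ) < a
    · linarith [(Fc s (Fc' s hsa h1)).2.2.2]
    · linarith [qmin s ((memS s).2 ⟨sm, by omega, h2, h1⟩), D.wpos s]
  have sa : (s : ℕ) < a := by
    by_contra hsa
    have hsw := D.wQ s m (by omega) sm.le mb
    have : X ≤ x s := by
      by_contra hlt
      obtain ⟨i, hi, hi1, hi2⟩ := prefW_locate w c hcn _ (D.x0 s) (not_le.1 hlt)
      obtain ⟨f1, f2, f3, f4⟩ := Fc i hi
      have p1 := D.wpos s
      have p2 := D.hpos s
      have p3 := (D.posF i (by omega)).1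
      have p4 := D.y0 s
      rcases D.sep i s (by intro e; rw [e] at hi; omega) with s | s | s | s <;> linarith
    linarith
  obtain ⟨ys, xs⟩ := D.posF s sa
  have hqH := hH q hqS.2.1
  -- the bump
  set T := Finset.univ.filter (fun i : Fin n => (i : ℕ) < (s : ℕ) + 1) with hT
  set C := Finset.univ.filter (fun i : Fin n => (i : ℕ) < c) with hC
  have cs : c ≤ (s : ℕ) + 1 := by
    by_contra hlt
    have := (Fc s (by omega)).2.1
    linarith
  have CT : C ⊆ T := by intro i; simp [hC, hT]; omega
  have tele1 := prefW_tele w (fun u => min u (W / 3)) ((s : ℕ) + 1) (by omega)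
  have tele2 := prefW_tele w (fun u => min u (W / 3)) c hcn
  have hsx : prefW w ((s : ℕ) + 1) = x q := by rw [prefW_succ, ← xs, s2]
  rw [hsx] at tele1
  have hsplit := Finset.sum_sdiff (f := bumpP W w) CT
  have hbump : ∑ i ∈ T \ C, bumpP W w i ≤ bumpFn W H w h a t := by
    have : ∑ i ∈ T \ C, bumpP W w i = ∑ i ∈ T \ C,
        (Set.Ioo (h i) (h i + H / 2)).indicator (fun _ => bumpP W w i) t := by
      apply Finset.sum_congr rfl
      intro i hi
      rw [Finset.mem_sdiff] at hi
      simp [hC, hT] at hi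
      have hia : (i : ℕ) < a := by omega
      obtain ⟨yi, -⟩ := D.posF i hia
      have h1 : h s ≤ h i := D.hF i s (by rw [Fin.le_def]; omega) sa
      have h2 : ¬ t < h i := fun h2 => by have := (hc i).1 ⟨hia, h2⟩; omega
      have h3 : t ≠ h i := by have := gen' i; rwa [yi, zero_add] at this
      have h4 : h i < t := lt_of_le_of_ne (not_lt.1 h2) h3.symm
      rw [Set.indicator_of_mem (show t ∈ Set.Ioo (h i) (h i + H / 2) from
        ⟨h4, by linarith⟩)]
    rw [this]
    apply Finset.sum_le_sum_of_subset_of_nonneg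
    · intro i hi
      rw [Finset.mem_sdiff] at hi
      simp [hC, hT] at hi ⊢
      omega
    · intro i _ _
      exact Set.indicator_nonneg (fun _ _ => bumpP_nonneg D.wpos i) _
  have e1 : ∑ i ∈ T, bumpP W w i = min (x q) (W / 3) - min 0 (W / 3) := tele1
  have e2 : ∑ i ∈ C, bumpP W w i = min X (W / 3) - min 0 (W / 3) := tele2
  refine le_trans ?_ hbump
  have e3 : ∑ i ∈ T \ C, bumpP W w i = min (x q) (W / 3) - min X (W / 3) := by linarith
  rw [e3]
  rcases le_total (x q) (W / 3) with u | u <;> rcases le_total X (W / 3) with v | v <;>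
    simp only [min_eq_left, min_eq_right, u, v] <;> linarith

lemma integral_nonpos_off_finite (f : ℝ → ℝ) (u v : ℝ) (huv : u ≤ v) (B : Set ℝ) (hB : B.Finite)
    (hf : ∀ t, u < t → t < v → t ∉ B → f t ≤ 0) : ∫ t in u..v, f t ≤ 0 := by
  rw [intervalIntegral.integral_of_le huv]
  apply MeasureTheory.integral_nonpos_of_ae
  have h1 : ∀ᵐ t ∂(volume : Measure ℝ), t ∉ B ∪ {v} :=
    (hB.union (Set.finite_singleton v)).countable.ae_notMem _
  filter_upwards [ae_restrict_mem measurableSet_Ioc, ae_restrict_of_ae h1] with t ht ht'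
  simp only [Set.mem_union, Set.mem_singleton_iff, not_or] at ht'
  exact hf t ht.1 (lt_of_le_of_ne ht.2 ht'.2) ht'.1

lemma ind_int (u v c p q : ℝ) :
    IntervalIntegrable ((Set.Ioo u v).indicator (fun _ => c)) volume p q := by
  have : IntegrableOn (fun _ : ℝ => c) (Set.Ioo u v) :=
    integrableOn_const (by simp)
  exact ((integrable_indicator_iff measurableSet_Ioo).2 this).intervalIntegrable

lemma ind_integral_le (u v c K : ℝ) (huv : u ≤ v) (hK : 0 ≤ K) (hc : 0 ≤ c) :
    ∫ t in (0:ℝ)..K, (Set.Ioo u v).indicator (fun _ => c) t ≤ c * (v - u) := by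
  have hi : IntegrableOn (fun _ : ℝ => c) (Set.Ioo u v) :=
    integrableOn_const (by simp)
  have hi' := (integrable_indicator_iff measurableSet_Ioo).2 hi
  rw [intervalIntegral.integral_of_le hK]
  refine (setIntegral_le_integral hi' ?_).trans ?_
  · exact Filter.Eventually.of_forall (fun t => Set.indicator_nonneg (fun _ _ => hc) t)
  · rw [integral_indicator measurableSet_Ioo]
    simp [huv, mul_comm]

lemma ind_integral_eq (u v c K : ℝ) (hu : 0 ≤ u) (huv : u ≤ v) (hv : v ≤ K) :
    ∫ t in (0:ℝ)..K, (Set.Ioo u v).indicator (fun _ => c) t = c * (v - u) := by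
  rw [intervalIntegral.integral_of_le (by linarith), setIntegral_indicator measurableSet_Ioo]
  have : Set.Ioc 0 K ∩ Set.Ioo u v = Set.Ioo u v := by
    rw [Set.inter_eq_right]
    intro t ht
    exact ⟨by linarith [ht.1], by linarith [ht.2]⟩
  rw [this]
  simp [huv, mul_comm]

lemma occFn_int (w h y : Fin n → ℝ) (p q : ℝ) :
    IntervalIntegrable (occFn w h y) volume p q := by
  have : occFn w h y = ∑ i, (Set.Ioo (y i) (y i + h i)).indicator (fun _ => w i) := by
    ext t; simp [occFn]
  rw [this]
  exact IntervalIntegrable.sum _ (fun i _ => ind_int _ _ _ _ _)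

lemma bumpFn_int (H p q : ℝ) :
    IntervalIntegrable (bumpFn W H w h a) volume p q := by
  have : bumpFn W H w h a = ∑ i ∈ Finset.univ.filter (fun i : Fin n => (i : ℕ) < a),
      (Set.Ioo (h i) (h i + H / 2)).indicator (fun _ => bumpP W w i) := by
    ext t; simp [bumpFn]
  rw [this]
  exact IntervalIntegrable.sum _ (fun i _ => ind_int _ _ _ _ _)

lemma occFn_integral_le (hw : ∀ i, 0 < w i) (hh : ∀ i, 0 < h i) (K : ℝ) (hK : 0 ≤ K) :
    ∫ t in (0:ℝ)..K, occFn w h y t ≤ ∑ i, w i * h i := by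
  unfold occFn
  rw [intervalIntegral.integral_finsetSum (fun i _ => ind_int _ _ _ _ _)]
  apply Finset.sum_le_sum
  intro i _
  have := ind_integral_le (y i) (y i + h i) (w i) K (by linarith [hh i]) hK (hw i).le
  rwa [add_sub_cancel_left] at this

lemma bumpFn_integral_le (D : BLD W w h x y a b) (H K : ℝ) (hH : 0 ≤ H) (hK : 0 ≤ K) :
    ∫ t in (0:ℝ)..K, bumpFn W H w h a t ≤ W / 3 * (H / 2) := by
  unfold bumpFn
  rw [intervalIntegral.integral_finsetSum (fun i _ => ind_int _ _ _ _ _)]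
  have h1 : ∑ i ∈ Finset.univ.filter (fun i : Fin n => (i : ℕ) < a),
      ∫ t in (0:ℝ)..K, (Set.Ioo (h i) (h i + H / 2)).indicator (fun _ => bumpP W w i) t ≤
      ∑ i ∈ Finset.univ.filter (fun i : Fin n => (i : ℕ) < a), bumpP W w i * (H / 2) := by
    apply Finset.sum_le_sum
    intro i _
    have := ind_integral_le (h i) (h i + H / 2) (bumpP W w i) K (by linarith) hK
      (bumpP_nonneg D.wpos i)
    rwa [add_sub_cancel_left] at this
  refine h1.trans ?_
  rw [← Finset.sum_mul]
  have tele := prefW_tele w (fun u => min u (W / 3)) a D.an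
  have : ∑ i ∈ Finset.univ.filter (fun i : Fin n => (i : ℕ) < a), bumpP W w i =
      min (prefW w a) (W / 3) - min 0 (W / 3) := tele
  rw [this]
  apply mul_le_mul_of_nonneg_right _ (by linarith)
  rw [min_eq_left (show (0:ℝ) ≤ W / 3 by linarith [D.Wpos])]
  linarith [min_le_right (prefW w a) (W / 3)]

/-- Area bound for any feasible packing. -/
lemma Pk.area {x' y' : Fin n → ℝ} (P : Pk W w h x' y') (hW : 0 ≤ W) (H : ℝ) (hH0 : 0 ≤ H)
    (hH : ∀ i, y' i + h i ≤ H) : ∑ i, w i * h i ≤ W * H := by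
  have h1 : ∫ t in (0:ℝ)..H, occFn w h y' t = ∑ i, w i * h i := by
    unfold occFn
    rw [intervalIntegral.integral_finsetSum (fun i _ => ind_int _ _ _ _ _)]
    apply Finset.sum_congr rfl
    intro i _
    rw [ind_integral_eq _ _ _ _ (P.y0 i) (by linarith [P.hpos i]) (hH i), add_sub_cancel_left]
  rw [← h1]
  have h2 : ∫ t in (0:ℝ)..H, occFn w h y' t ≤ ∫ _ in (0:ℝ)..H, W := by
    apply intervalIntegral.integral_mono_on hH0 (occFn_int _ _ _ _ _) (by simp)
    intro t _
    have := P.line_le hW (Finset.univ.filter (fun i => y' i < t ∧ t < y' i + h i)) t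
      (by intro i hi; simpa using hi)
    rw [Finset.sum_filter] at this
    refine le_trans (le_of_eq ?_) this
    apply Finset.sum_congr rfl
    intro i _
    simp only [Set.indicator_apply, Set.mem_Ioo]
  refine h2.trans (le_of_eq ?_)
  simp [mul_comm]

lemma BLD.half (D : BLD W w h x y a b) {x' y' : Fin n → ℝ} (P : Pk W w h x' y') (H : ℝ)
    (hH : ∀ i, y' i + h i ≤ H) (i : Fin n) (hi : a ≤ (i : ℕ)) : h i ≤ H / 2 := by
  by_contra hlt
  have hlt := not_le.1 hlt
  have g := D.greedy i hi
  have := P.line_le D.Wpos.le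
    (insert i (Finset.univ.filter (fun f : Fin n => (f : ℕ) < a ∧ h i ≤ h f))) (H / 2) (by
      intro j hj
      have : h i ≤ h j := by
        rcases Finset.mem_insert.1 hj with e | e
        · rw [e]
        · simp at e; exact e.2
      exact ⟨by linarith [hH j], by linarith [P.y0 j]⟩)
  rw [Finset.sum_insert (by simp; omega)] at this
  linarith

lemma BLD.hle (D : BLD W w h x y a b) (v : Fin n) (hv : a ≤ (v : ℕ)) : h v ≤ y v := by
  by_contra hlt
  have hlt := not_le.1 hlt
  have g := D.greedy v hv
  have hp := D.hpos v
  have hy := D.y0 v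
  have := D.toPk.line_le D.Wpos.le
    (insert v (Finset.univ.filter (fun f : Fin n => (f : ℕ) < a ∧ h v ≤ h f)))
    ((y v + h v) / 2) (by
      intro j hj
      rcases Finset.mem_insert.1 hj with e | e
      · rw [e]; constructor <;> linarith
      · simp at e
        have := (D.posF j e.1).1
        constructor <;> linarith)
  rw [Finset.sum_insert (by simp; omega)] at this
  linarith

lemma BLD.sumWide (D : BLD W w h x y a b) {x' y' : Fin n → ℝ} (P : Pk W w h x' y') (H : ℝ)
    (hH0 : 0 ≤ H) (hH : ∀ i, y' i + h i ≤ H) :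
    ∑ i ∈ Finset.univ.filter (fun i : Fin n => b ≤ (i : ℕ)), h i ≤ H := by
  apply sum_le_of_disjoint_intervals _ y' h H hH0 (fun i _ => (P.hpos i).le) (fun i _ => P.y0 i)
    (fun i _ => hH i)
  intro i hi j hj hij
  simp at hi hj
  have a1 := D.halfW i hi
  have a2 := D.halfW j hj
  have := P.x0 i
  have := P.x0 j
  have := P.xW i
  have := P.xW j
  rcases P.sep i j hij with s | s | s | s
  · linarith
  · linarith
  · exact Or.inl s
  · exact Or.inr s

lemma first_above (y : Fin n → ℝ) (t : ℝ) (v : Fin n) (hv : t < y v) :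
    ∃ m, m ≤ v ∧ t < y m ∧ ∀ j, j < m → y j ≤ t := by
  obtain ⟨m, hm, hmin⟩ := (Finset.univ.filter (fun i => t < y i)).exists_min_image id
    ⟨v, by simpa using hv⟩
  simp at hm hmin
  exact ⟨m, hmin v hv, hm, fun j hj => by
    by_contra hlt
    exact absurd (hmin j (not_le.1 hlt)) (not_le.2 hj)⟩

lemma BLD.key (D : BLD W w h x y a b) {x' y' : Fin n → ℝ} (P : Pk W w h x' y') (H : ℝ)
    (hH0 : 0 ≤ H) (hH : ∀ i, y' i + h i ≤ H) (v : Fin n) (va : a ≤ (v : ℕ)) (vb : (v : ℕ) < b)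
    (K : ℝ) (hK : y v + h v ≤ K)
    (up : ∀ t, y v + h v < t → t < K → (∀ j, t ≠ y j) → (∀ j, t ≠ y j + h j) →
      W ≤ 2 * occFn w h y t) :
    K ≤ 13 / 6 * H := by
  set f : ℝ → ℝ := fun t => W - 2 * occFn w h y t - bumpFn W H w h a t with hf
  have fi : ∀ p q, IntervalIntegrable f volume p q := fun p q =>
    ((intervalIntegrable_const).sub ((occFn_int _ _ _ p q).const_mul 2)).sub (bumpFn_int H p q)
  have bn := bumpFn_nonneg (W := W) (h := h) (a := a) H D.wpos
  have hvy := D.hle v va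
  have hv0 := D.hpos v
  set B : Set ℝ := Set.range y ∪ Set.range (fun i => y i + h i) with hB
  have Bfin : B.Finite := (Set.finite_range _).union (Set.finite_range _)
  have gB : ∀ t, t ∉ B → (∀ j, t ≠ y j) ∧ (∀ j, t ≠ y j + h j) := by
    intro t ht
    simp only [hB, Set.mem_union, Set.mem_range, not_or, not_exists] at ht
    exact ⟨fun j e => ht.1 j e.symm, fun j e => ht.2 j e.symm⟩
  have I2 : ∫ t in (h v)..(y v), f t ≤ 0 := by
    apply integral_nonpos_off_finite f _ _ hvy B Bfin
    intro t t1 t2 tB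
    obtain ⟨g1, g2⟩ := gB t tB
    obtain ⟨m, m1, m2, m3⟩ := first_above y t v t2
    have ma : a ≤ (m : ℕ) := by
      by_contra hlt
      linarith [(D.posF m (by omega)).1]
    have m1' : (m : ℕ) ≤ v := m1
    have := D.pointwise H (D.half P H hH) m ma (by omega) t (by linarith) m2 m3 g1 g2
    simp only [hf]; linarith
  have I4 : ∫ t in (y v + h v)..K, f t ≤ 0 := by
    apply integral_nonpos_off_finite f _ _ hK B Bfin
    intro t t1 t2 tB
    obtain ⟨g1, g2⟩ := gB t tB
    have := up t t1 t2 g1 g2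
    simp only [hf]; linarith [bn t]
  have I13 : (∫ t in (0:ℝ)..(h v), f t) + ∫ t in (y v)..(y v + h v), f t ≤ 0 := by
    have sh : ∫ t in (0:ℝ)..(h v), f (t + y v) = ∫ t in (y v)..(y v + h v), f t := by
      rw [intervalIntegral.integral_comp_add_right]; simp [add_comm]
    have fi' : IntervalIntegrable (fun t => f (t + y v)) volume 0 (h v) := by
      have := (fi (y v) (y v + h v)).comp_add_right (y v)
      simpa using this
    rw [← sh, ← intervalIntegral.integral_add (fi _ _) fi']
    apply integral_nonpos_off_finite _ _ _ hv0.le ∅ Set.finite_empty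
    intro t t1 t2 _
    have o1 := occFn_ge (y := y) (h := h) D.wpos t
      (Finset.univ.filter (fun f : Fin n => (f : ℕ) < a ∧ h v ≤ h f)) (by
        intro i hi
        simp at hi
        have := (D.posF i hi.1).1
        constructor <;> linarith)
    have o2 := occFn_ge (y := y) (h := h) D.wpos (t + y v) {v} (by
        intro i hi
        simp at hi
        rw [hi]
        constructor <;> linarith)
    simp at o2
    have g := D.greedy v va
    simp only [hf]
    linarith [bn t, bn (t + y v)]
  have K0 : 0 ≤ K := by linarith
  have tot : ∫ t in (0:ℝ)..K, f t ≤ 0 := by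
    rw [← intervalIntegral.integral_add_adjacent_intervals (fi 0 (h v)) (fi (h v) K),
      ← intervalIntegral.integral_add_adjacent_intervals (fi (h v) (y v)) (fi (y v) K),
      ← intervalIntegral.integral_add_adjacent_intervals (fi (y v) (y v + h v))
        (fi (y v + h v) K)]
    linarith
  have e1 : ∫ t in (0:ℝ)..K, f t = W * K - 2 * (∫ t in (0:ℝ)..K, occFn w h y t) -
      ∫ t in (0:ℝ)..K, bumpFn W H w h a t := by
    simp only [hf]
    rw [intervalIntegral.integral_sub
      ((intervalIntegrable_const).sub ((occFn_int _ _ _ _ _).const_mul 2)) (bumpFn_int H _ _),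
      intervalIntegral.integral_sub (intervalIntegrable_const) ((occFn_int _ _ _ _ _).const_mul 2),
      intervalIntegral.integral_const_mul]
    simp [mul_comm]
  have o := occFn_integral_le (y := y) D.wpos D.hpos K K0
  have ar := P.area D.Wpos.le H hH0 hH
  have bu := bumpFn_integral_le D H K hH0 K0
  have : W * K ≤ W * (13 / 6 * H) := by linarith
  exact le_of_mul_le_mul_left this D.Wpos

lemma BLD.main (D : BLD W w h x y a b) {x' y' : Fin n → ℝ} (P : Pk W w h x' y') (H : ℝ)
    (hH0 : 0 ≤ H) (hH : ∀ i, y' i + h i ≤ H) (i : Fin n) : y i + h i ≤ 13 / 6 * H := by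
  have hmax : ∀ j, h j ≤ H := fun j => by linarith [hH j, P.y0 j]
  by_cases ia : (i : ℕ) < a
  · linarith [(D.posF i ia).1, hmax i]
  by_cases ib : (i : ℕ) < b
  · exact D.key P H hH0 hH i (by omega) ib _ le_rfl (fun t h1 h2 => by linarith)
  -- wide rectangles
  have wide : ∀ t, H < t → t < y i + h i → (∀ j, t ≠ y j) →
      (∀ j : Fin n, a ≤ (j : ℕ) → (j : ℕ) < b → y j + h j ≤ t) →
      ∃ j : Fin n, b ≤ (j : ℕ) ∧ y j < t ∧ t < y j + h j := by
    intro t t1 t2 g1 top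
    by_cases hy : y i < t
    · exact ⟨i, by omega, hy, t2⟩
    · have hy' : t < y i := lt_of_le_of_ne (not_lt.1 hy) (g1 i)
      obtain ⟨m, m1, m2, m3⟩ := first_above y t i hy'
      obtain ⟨j, j1, j2, j3, -⟩ := D.window m t (by linarith) m2 m3 g1 0 le_rfl
        (by linarith [D.xW m, D.x0 m])
      refine ⟨j, ?_, j2, j3⟩
      by_contra hjb
      by_cases ja : (j : ℕ) < a
      · linarith [(D.posF j ja).1, hmax j]
      · linarith [top j (by omega) (by omega)]
  set S := Finset.univ.filter (fun j : Fin n => a ≤ (j : ℕ) ∧ (j : ℕ) < b) with hS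
  by_cases hT : ∃ v ∈ S, H < y v + h v
  · obtain ⟨v0, hv0, hv0'⟩ := hT
    obtain ⟨v, hv, vmax⟩ := S.exists_max_image (fun j => y j + h j) ⟨v0, hv0⟩
    have hvH := vmax v0 hv0
    simp [hS] at hv
    by_cases hK : y i + h i ≤ y v + h v
    · exact hK.trans (D.key P H hH0 hH v hv.1 hv.2 _ le_rfl (fun t h1 h2 => by linarith))
    · apply D.key P H hH0 hH v hv.1 hv.2 _ (le_of_not_ge hK)
      intro t t1 t2 g1 g2
      obtain ⟨j, j1, j2, j3⟩ := wide t (by linarith) t2 g1 (fun j ja jb => by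
        linarith [vmax j (by simp [hS]; exact ⟨ja, jb⟩)])
      have o2 := occFn_ge (y := y) (h := h) D.wpos t {j} (by
        intro k hk
        simp at hk
        rw [hk]
        exact ⟨j2, j3⟩)
      simp at o2
      linarith [D.halfW j j1]
  · push Not at hT
    have sw := D.sumWide P H hH0 hH
    have : y i + h i - H ≤ ∑ j ∈ Finset.univ.filter (fun j : Fin n => b ≤ (j : ℕ)), h j := by
      apply length_le_of_cover _ y h _ _ (fun j _ => (D.hpos j).le)
      intro t t1 t2
      by_cases g1 : ∀ j, t ≠ y j
      · obtain ⟨j, j1, j2, j3⟩ := wide t t1 t2 g1 (fun j ja jb =>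
          (hT j (by simp [hS]; exact ⟨ja, jb⟩)).trans t1.le)
        exact ⟨j, by simpa using j1, j2.le, j3.le⟩
      · push Not at g1
        obtain ⟨j, hj⟩ := g1
        by_cases jb : b ≤ (j : ℕ)
        · exact ⟨j, by simpa using jb, hj.ge, by linarith [D.hpos j]⟩
        · exfalso
          have := D.hpos j
          by_cases ja : (j : ℕ) < a
          · linarith [(D.posF j ja).1]
          · linarith [hT j (by simp [hS]; omega)]
    linarith

/-! ### Transfer to the frozen definitions -/

lemma boxSep_of_disjoint {R S : Rect} {p q : ℝ × ℝ} (hRw : 0 < R.w) (hRh : 0 < R.h)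
    (hSw : 0 < S.w) (hSh : 0 < S.h) (hd : Disjoint (openBox R p) (openBox S q)) :
    BoxSep p.1 R.w p.2 R.h q.1 S.w q.2 S.h := by
  unfold BoxSep
  by_contra hs
  push Not at hs
  obtain ⟨h1, h2, h3, h4⟩ := hs
  obtain ⟨u, hu1, hu2⟩ := exists_between (show max p.1 q.1 < min (p.1 + R.w) (q.1 + S.w) by
    simp only [max_lt_iff, lt_min_iff]; constructor <;> constructor <;> linarith)
  obtain ⟨v, hv1, hv2⟩ := exists_between (show max p.2 q.2 < min (p.2 + R.h) (q.2 + S.h) by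
    simp only [max_lt_iff, lt_min_iff]; constructor <;> constructor <;> linarith)
  simp only [max_lt_iff, lt_min_iff] at hu1 hu2 hv1 hv2
  have hd' : ∀ z, z ∈ openBox R p → z ∉ openBox S q := fun z hz => Set.disjoint_left.1 hd hz
  exact hd' (u, v) ⟨⟨hu1.1, hu2.1⟩, ⟨hv1.1, hv2.1⟩⟩
    ⟨⟨hu1.2, hu2.2⟩, ⟨hv1.2, hv2.2⟩⟩

lemma disjoint_of_boxSep {R S : Rect} {p q : ℝ × ℝ}
    (hs : BoxSep p.1 R.w p.2 R.h q.1 S.w q.2 S.h) : Disjoint (openBox R p) (openBox S q) := by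
  rw [Set.disjoint_left]
  rintro ⟨u, v⟩ ⟨⟨a1, a2⟩, a3, a4⟩ ⟨⟨b1, b2⟩, b3, b4⟩
  simp only at a1 a2 a3 a4 b1 b2 b3 b4
  rcases hs with h | h | h | h <;> linarith

lemma Pk.of_feasible (I : SPInstance n) (pos : Fin n → ℝ × ℝ) (hf : I.Feasible pos) :
    Pk I.W (fun i => (I.r i).w) (fun i => (I.r i).h) (fun i => (pos i).1) (fun i => (pos i).2) where
  wpos := I.w_pos
  hpos := I.h_pos
  x0 i := (hf.1 i).1
  xW i := (hf.1 i).2.1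
  y0 i := (hf.1 i).2.2
  sep i j hij := boxSep_of_disjoint (I.w_pos i) (I.h_pos i) (I.w_pos j) (I.h_pos j) (hf.2 hij)

lemma feasible_of_BL (I : SPInstance n) (pos : Fin n → ℝ × ℝ) (hBL : I.IsBL pos) :
    I.Feasible pos := by
  refine ⟨fun i => (hBL i).1.1, fun i j hij => ?_⟩
  rcases lt_or_gt_of_ne hij with h | h
  · exact ((hBL j).1.2 i h).symm
  · exact (hBL i).1.2 j h

/-- One step of the greedy construction. -/
noncomputable def gstep (I : SPInstance n) (σ : Equiv.Perm (Fin n)) (F : Finset (Fin n))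
    (k : Fin n) : Finset (Fin n) :=
  if (I.r (σ k)).w + ∑ f ∈ F, (I.r f).w ≤ I.W then insert (σ k) F else F

lemma gfold_sum (I : SPInstance n) (σ : Equiv.Perm (Fin n)) (l : List (Fin n))
    (F : Finset (Fin n)) (hF : ∑ f ∈ F, (I.r f).w ≤ I.W) :
    ∑ f ∈ l.foldl (gstep I σ) F, (I.r f).w ≤ I.W := by
  induction l generalizing F with
  | nil => simpa using hF
  | cons k l ih =>
    rw [List.foldl_cons]
    apply ih
    unfold gstep
    split_ifs with hc
    · by_cases hm : σ k ∈ F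
      · rw [Finset.insert_eq_of_mem hm]; exact hF
      · rw [Finset.sum_insert hm]; exact hc
    · exact hF

lemma gfold_mono (I : SPInstance n) (σ : Equiv.Perm (Fin n)) (l : List (Fin n))
    (F : Finset (Fin n)) : F ⊆ l.foldl (gstep I σ) F := by
  induction l generalizing F with
  | nil => simp
  | cons k l ih =>
    rw [List.foldl_cons]
    refine subset_trans ?_ (ih _)
    unfold gstep
    split_ifs
    · exact Finset.subset_insert _ _
    · exact subset_rfl

lemma gfold_sub (I : SPInstance n) (σ : Equiv.Perm (Fin n)) (l : List (Fin n))
    (F : Finset (Fin n)) (f : Fin n) (hf : f ∈ l.foldl (gstep I σ) F) :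
    f ∈ F ∨ ∃ k ∈ l, f = σ k := by
  induction l generalizing F with
  | nil => left; simpa using hf
  | cons k l ih =>
    rw [List.foldl_cons] at hf
    rcases ih _ hf with h | ⟨k', h1, h2⟩
    · unfold gstep at h
      split_ifs at h
      · rcases Finset.mem_insert.1 h with e | e
        · right; exact ⟨k, by simp, e⟩
        · left; exact e
      · left; exact h
    · right; exact ⟨k', by simp [h1], h2⟩

lemma greedy_fact (I : SPInstance n) (d : FQW I) (i : Fin n) (hi : i ∉ d.F) :
    I.W < (I.r i).w + ∑ f ∈ d.F.filter (fun f => (I.r i).h ≤ (I.r f).h), (I.r f).w := by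
  have hdF : d.F = (List.finRange n).foldl (gstep I d.σ) ∅ := rfl
  obtain ⟨k, rfl⟩ := d.σ.surjective i
  obtain ⟨l1, l2, hl⟩ := List.append_of_mem (List.mem_finRange k)
  have hpw : (List.finRange n).Pairwise (· < ·) := List.pairwise_lt_finRange n
  rw [hl, List.foldl_append, List.foldl_cons] at hdF
  rw [hl, List.pairwise_append] at hpw
  set G := l1.foldl (gstep I d.σ) ∅ with hG
  have hmono := gfold_mono I d.σ l2 (gstep I d.σ G k)
  rw [← hdF] at hmono
  by_cases hc : (I.r (d.σ k)).w + ∑ f ∈ G, (I.r f).w ≤ I.W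
  · exfalso
    apply hi
    apply hmono
    unfold gstep
    rw [if_pos hc]
    exact Finset.mem_insert_self _ _
  · have e : gstep I d.σ G k = G := by unfold gstep; rw [if_neg hc]
    rw [e] at hmono
    have hc := not_le.1 hc
    refine hc.trans_le ?_
    gcongr
    · intro f _ _; exact (I.w_pos f).le
    · intro f hf
      rw [Finset.mem_filter]
      refine ⟨hmono hf, ?_⟩
      rcases gfold_sub I d.σ l1 ∅ f hf with h | ⟨k', h1, h2⟩
      · simp at h
      · rw [h2]
        exact d.sorted k' k (hpw.2.2 k' h1 k (by simp)).le

lemma BLD.of_IsBL (I : SPInstance n) (d : FQW I) (hord : d.IsOrdered) (pos : Fin n → ℝ × ℝ)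
    (hBL : I.IsBL pos) :
    BLD I.W (fun i => (I.r i).w) (fun i => (I.r i).h) (fun i => (pos i).1) (fun i => (pos i).2)
      d.F.card (d.F.card + d.Q.card) := by
  obtain ⟨o1, o2, o3, o4⟩ := hord
  have eF : d.F = Finset.univ.filter (fun i : Fin n => (i : ℕ) < d.F.card) := by
    ext i; simp [← o1 i]
  refine { Pk.of_feasible I pos (feasible_of_BL I pos hBL) with
    Wpos := I.W_pos, bl := ?_, an := ?_, ab := by omega, sumF := ?_, hF := ?_, wQ := ?_,
    halfQ := ?_, halfW := ?_, greedy := ?_ }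
  · intro i px py h1 h2 h3 h4
    exact (hBL i).2 (px, py) ⟨⟨h1, h2, h3⟩, fun j hj => disjoint_of_boxSep (h4 j hj)⟩
  · simpa using d.F.card_le_univ
  · unfold prefW
    rw [← eF]
    exact gfold_sum I d.σ (List.finRange n) ∅ (by simpa using I.W_pos.le)
  · intro i j hij hj; exact o3 i j hij hj
  · intro i j hi hij hj; exact o4 i j hi hij hj
  · intro i hi hi'
    have := (o2 i).2 ⟨hi, hi'⟩
    simp only [FQW.Q, Finset.mem_filter] at this
    exact not_lt.1 this.2.2
  · intro i hi
    by_contra hlt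
    have hF : i ∉ d.F := fun h => by have := (o1 i).1 h; omega
    have : i ∈ d.Q := by
      simp only [FQW.Q, Finset.mem_filter]
      exact ⟨Finset.mem_univ _, hF, hlt⟩
    have := (o2 i).1 this
    omega
  · intro i hi
    have hF : i ∉ d.F := fun h => by have := (o1 i).1 h; omega
    have := greedy_fact I d i hF
    rw [← Finset.filter_filter, ← eF]
    exact this

end Core

/-- **Theorem (13/6-approximation).** If the rectangles of a Strip Packing
instance are listed in the FQW-ordering, then the height of the Bottom-Left
packing is at most `13/6` times the optimum height. -/
theorem bl_fqw_thirteen_sixths {n : ℕ} (I : SPInstance n) (d : FQW I)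
    (hord : d.IsOrdered) (pos : Fin n → ℝ × ℝ) (hBL : I.IsBL pos) :
    I.height pos ≤ 13 / 6 * I.hOPT := by
  have D := BLD.of_IsBL I d hord pos hBL
  have hb : ∀ p : Fin n → ℝ × ℝ, I.Feasible p → I.height pos ≤ 13 / 6 * I.height p := by
    intro p hp
    have P := Pk.of_feasible I p hp
    have H0 : 0 ≤ I.height p :=
      Real.iSup_nonneg (fun i => add_nonneg (P.y0 i) (P.hpos i).le)
    have Hi : ∀ i, (p i).2 + (I.r i).h ≤ I.height p := fun i =>
      le_ciSup (f := fun i => (p i).2 + (I.r i).h) (Set.finite_range _).bddAbove i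
    exact Real.iSup_le (fun i => D.main P _ H0 Hi i) (by linarith)
  have : 6 / 13 * I.height pos ≤ I.hOPT := by
    unfold SPInstance.hOPT
    refine le_csInf ⟨I.height pos, pos, feasible_of_BL I pos hBL, rfl⟩ ?_
    rintro H ⟨p, hp, rfl⟩
    linarith [hb p hp]
  linarith
end

section
/- Let (W, r_1, …, r_n) be a Strip Packing instance whose rectangles are listed in the FQW-ordering with Q ≠ ∅, and consider its BL packing. Let k ≥ 1 and ℓ ∈ L^k. Then either LM(ℓ) = LM^k, or the occupied fraction of ℓ is at least 1/2. -/
open scoped Classical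
open MeasureTheory

namespace HalfOcc

variable {n : ℕ} {I : SPInstance n} {d : FQW I} {pos : Fin n → ℝ × ℝ}

lemma not_disjoint_box {R R' : Rect} {p p' : ℝ × ℝ}
    (hw : 0 < R.w) (hh : 0 < R.h) (hw' : 0 < R'.w) (hh' : 0 < R'.h)
    (h1 : p.1 < p'.1 + R'.w) (h2 : p'.1 < p.1 + R.w)
    (h3 : p.2 < p'.2 + R'.h) (h4 : p'.2 < p.2 + R.h) :
    ¬ Disjoint (openBox R p) (openBox R' p') := by
  intro hd
  obtain ⟨x, hx1, hx2⟩ := exists_between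
    (show max p.1 p'.1 < min (p.1 + R.w) (p'.1 + R'.w) by
      rw [max_lt_iff, lt_min_iff, lt_min_iff]
      exact ⟨⟨by linarith, h1⟩, ⟨h2, by linarith⟩⟩)
  obtain ⟨y, hy1, hy2⟩ := exists_between
    (show max p.2 p'.2 < min (p.2 + R.h) (p'.2 + R'.h) by
      rw [max_lt_iff, lt_min_iff, lt_min_iff]
      exact ⟨⟨by linarith, h3⟩, ⟨h4, by linarith⟩⟩)
  rw [max_lt_iff] at hx1 hy1
  rw [lt_min_iff] at hx2 hy2
  have hd' := Set.disjoint_left.mp hd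
  exact @hd' (x, y)
    ⟨⟨hx1.1, hx2.1⟩, ⟨hy1.1, hy2.1⟩⟩ ⟨⟨hx1.2, hx2.2⟩, ⟨hy1.2, hy2.2⟩⟩

lemma disjoint_box {R R' : Rect} {p p' : ℝ × ℝ}
    (h : p'.1 + R'.w ≤ p.1 ∨ p.1 + R.w ≤ p'.1 ∨ p'.2 + R'.h ≤ p.2 ∨ p.2 + R.h ≤ p'.2) :
    Disjoint (openBox R p) (openBox R' p') := by
  rw [Set.disjoint_left]
  rintro ⟨x, y⟩ ⟨⟨h1, h2⟩, ⟨h3, h4⟩⟩ ⟨⟨h5, h6⟩, ⟨h7, h8⟩⟩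
  simp only at *
  rcases h with h | h | h | h <;> linarith

lemma exists_overlap {R R' : Rect} {p p' : ℝ × ℝ}
    (h : ¬ Disjoint (openBox R p) (openBox R' p')) :
    p.1 < p'.1 + R'.w ∧ p'.1 < p.1 + R.w ∧ p.2 < p'.2 + R'.h ∧ p'.2 < p.2 + R.h := by
  by_contra hc
  apply h
  apply disjoint_box
  by_contra hc2
  push Not at hc2
  exact hc ⟨hc2.1, hc2.2.1, hc2.2.2.1, hc2.2.2.2⟩

/-- Two different rectangles are separated. -/
lemma sep (hBL : I.IsBL pos) {i j : Fin n} (hij : i ≠ j) :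
    (pos j).1 + (I.r j).w ≤ (pos i).1 ∨ (pos i).1 + (I.r i).w ≤ (pos j).1 ∨
    (pos j).2 + (I.r j).h ≤ (pos i).2 ∨ (pos i).2 + (I.r i).h ≤ (pos j).2 := by
  by_contra hc
  push Not at hc
  obtain ⟨h1, h2, h3, h4⟩ := hc
  rcases lt_or_gt_of_ne hij with h | h
  · exact not_disjoint_box (I.w_pos j) (I.h_pos j) (I.w_pos i) (I.h_pos i) h2 h1 h4 h3
      ((hBL j).1.2 i h)
  · exact not_disjoint_box (I.w_pos i) (I.h_pos i) (I.w_pos j) (I.h_pos j) h1 h2 h3 h4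
      ((hBL i).1.2 j h)

lemma sum_F_le : ∑ f ∈ d.F, (I.r f).w ≤ I.W := by
  unfold FQW.F SPInstance.greedyF
  have key : ∀ (l : List (Fin n)) (F : Finset (Fin n)), ∑ f ∈ F, (I.r f).w ≤ I.W →
      ∑ f ∈ l.foldl (fun F k => if (I.r (d.σ k)).w + ∑ f ∈ F, (I.r f).w ≤ I.W
        then insert (d.σ k) F else F) F, (I.r f).w ≤ I.W := by
    intro l
    induction l with
    | nil => intro F h; simpa using h
    | cons k l ih =>
      intro F h
      rw [List.foldl_cons]
      apply ih
      split_ifs with hc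
      · by_cases hm : d.σ k ∈ F
        · rwa [Finset.insert_eq_of_mem hm]
        · rwa [Finset.sum_insert hm]
      · exact h
  exact key _ _ (by simpa using I.W_pos.le)

/-- Intervals pushed to the right of a prefix. -/
lemma push (P : Fin n → Prop) (hP : ∀ i j, i ≤ j → P j → P i) (u v : ℝ) (hu : 0 ≤ u) (hv : 0 < v)
    (hx : ∀ j, P j → (pos j).1 = ∑ i ∈ Finset.Iio j, (I.r i).w)
    (hs : ∀ j, P j → u + v ≤ (pos j).1 ∨ (pos j).1 + (I.r j).w ≤ u) :
    ∑ i ∈ Finset.univ.filter P, (I.r i).w ≤ u := by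
  have key : ∀ N : ℕ, ∑ i ∈ Finset.univ.filter (fun i : Fin n => (i : ℕ) < N ∧ P i),
      (I.r i).w ≤ u := by
    intro N
    induction N with
    | zero => simpa using hu
    | succ N ih =>
      by_cases hN : ∃ j : Fin n, (j : ℕ) = N ∧ P j
      · obtain ⟨j, hj, hPj⟩ := hN
        have e1 : Finset.univ.filter (fun i : Fin n => (i : ℕ) < N ∧ P i) = Finset.Iio j := by
          ext i
          simp only [Finset.mem_filter, Finset.mem_univ, true_and, Finset.mem_Iio]
          constructor
          · intro h; exact Fin.lt_def.mpr (by omega)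
          · intro h; exact ⟨by have := Fin.lt_def.mp h; omega, hP i j h.le hPj⟩
        have e2 : Finset.univ.filter (fun i : Fin n => (i : ℕ) < N + 1 ∧ P i)
            = insert j (Finset.Iio j) := by
          ext i
          simp only [Finset.mem_filter, Finset.mem_univ, true_and, Finset.mem_Iio,
            Finset.mem_insert]
          constructor
          · intro h
            by_cases hij : i = j
            · exact Or.inl hij
            · right; apply Fin.lt_def.mpr
              have : (i : ℕ) ≠ j := fun h => hij (Fin.ext h)
              omega
          · rintro (h | h)
            · subst h; exact ⟨by omega, hPj⟩
            · exact ⟨by have := Fin.lt_def.mp h; omega, hP i j h.le hPj⟩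
        rw [e1] at ih
        rw [e2, Finset.sum_insert (by simp)]
        have h1 := hx j hPj
        rcases hs j hPj with h | h <;> linarith
      · have e : Finset.univ.filter (fun i : Fin n => (i : ℕ) < N + 1 ∧ P i)
            = Finset.univ.filter (fun i : Fin n => (i : ℕ) < N ∧ P i) := by
          ext i
          simp only [Finset.mem_filter, Finset.mem_univ, true_and]
          constructor
          · rintro ⟨h1, h2⟩
            refine ⟨?_, h2⟩
            by_contra h3
            exact hN ⟨i, by omega, h2⟩
          · rintro ⟨h1, h2⟩; exact ⟨by omega, h2⟩
        rw [e]; exact ih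
  have := key n
  simpa using this

lemma F_down (hord : d.IsOrdered) {i j : Fin n} (h : i ≤ j) (hj : j ∈ d.F) : i ∈ d.F := by
  rw [hord.1] at hj ⊢
  have := Fin.le_def.mp h
  omega

/-- The rectangles of `F` stand side by side on the bottom. -/
lemma F_pos (hord : d.IsOrdered) (hBL : I.IsBL pos) : ∀ i : Fin n, i ∈ d.F →
    (pos i).1 = ∑ j ∈ Finset.Iio i, (I.r j).w ∧ (pos i).2 = 0 := by
  intro i
  induction i using WellFoundedLT.induction with
  | ind i ih =>
  intro hi
  have ih' : ∀ j, j < i → (pos j).1 = ∑ k ∈ Finset.Iio j, (I.r k).w ∧ (pos j).2 = 0 :=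
    fun j hj => ih j hj (F_down hord hj.le hi)
  have hS0 : 0 ≤ ∑ j ∈ Finset.Iio i, (I.r j).w :=
    Finset.sum_nonneg fun j _ => (I.w_pos j).le
  have hfeas : I.FeasibleAt pos i (∑ j ∈ Finset.Iio i, (I.r j).w, 0) := by
    refine ⟨⟨hS0, ?_, le_rfl⟩, ?_⟩
    · have h1 : ∑ j ∈ insert i (Finset.Iio i), (I.r j).w ≤ ∑ f ∈ d.F, (I.r f).w := by
        apply Finset.sum_le_sum_of_subset_of_nonneg
        · intro j hj
          rw [Finset.mem_insert, Finset.mem_Iio] at hj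
          rcases hj with h | h
          · exact h ▸ hi
          · exact F_down hord h.le hi
        · intro j _ _; exact (I.w_pos j).le
      rw [Finset.sum_insert (by simp)] at h1
      have := sum_F_le (d := d)
      simp only
      linarith
    · intro j hj
      apply disjoint_box
      left
      rw [(ih' j hj).1]
      have h1 : ∑ k ∈ insert j (Finset.Iio j), (I.r k).w ≤ ∑ f ∈ Finset.Iio i, (I.r f).w := by
        apply Finset.sum_le_sum_of_subset_of_nonneg
        · intro k hk
          rw [Finset.mem_insert, Finset.mem_Iio] at hk
          rw [Finset.mem_Iio]
          rcases hk with h | h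
          · exact h ▸ hj
          · exact h.trans hj
        · intro j _ _; exact (I.w_pos j).le
      rw [Finset.sum_insert (by simp)] at h1
      simp only
      linarith
  have hst := (hBL i).1.1
  have hy0 : (pos i).2 = 0 := by
    rcases (hBL i).2 _ hfeas with h | h
    · exact absurd hst.2.2 (not_le.mpr h)
    · exact h.1
  have hxle : (pos i).1 ≤ ∑ j ∈ Finset.Iio i, (I.r j).w := by
    rcases (hBL i).2 _ hfeas with h | h
    · exact absurd hst.2.2 (not_le.mpr h)
    · exact h.2
  refine ⟨le_antisymm hxle ?_, hy0⟩
  have := push (I := I) (pos := pos) (fun j => j < i) (fun a b hab hb => hab.trans_lt hb)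
    (pos i).1 (I.r i).w hst.1 (I.w_pos i) (fun j hj => (ih' j hj).1) (by
      intro j hj
      rcases sep hBL (ne_of_gt hj) with h | h | h | h
      · exact Or.inr h
      · exact Or.inl h
      · rw [(ih' j hj).2, hy0] at h; linarith [I.h_pos j]
      · rw [(ih' j hj).2, hy0] at h; linarith [I.h_pos i])
  have e : Finset.Iio i = Finset.univ.filter (fun j => j < i) := by
    ext j
    simp only [Finset.mem_filter, Finset.mem_univ, true_and, Finset.mem_Iio]
  rw [e]
  exact le_of_eq_of_le (by congr) this

/-- Total width of the rectangles of `F` higher than `t`. -/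
noncomputable def xF (I : SPInstance n) (d : FQW I) (t : ℝ) : ℝ :=
  ∑ i ∈ Finset.univ.filter (fun i => i ∈ d.F ∧ t < (I.r i).h), (I.r i).w

lemma F_h_down (hord : d.IsOrdered) (t : ℝ) (i j : Fin n) (h : i ≤ j)
    (hj : j ∈ d.F ∧ t < (I.r j).h) : i ∈ d.F ∧ t < (I.r i).h :=
  ⟨F_down hord h hj.1, hj.2.trans_le
    (hord.2.2.1 i j (Fin.le_def.mp h) ((hord.1 j).mp hj.1))⟩

lemma xF_nonneg (t : ℝ) : 0 ≤ xF I d t := Finset.sum_nonneg fun j _ => (I.w_pos j).le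

/-- A rectangle outside `F` starting below `t` is right of `xF t`. -/
lemma xF_le (hord : d.IsOrdered) (hBL : I.IsBL pos) {j : Fin n} (hj : j ∉ d.F) {t : ℝ}
    (ht : (pos j).2 < t) : xF I d t ≤ (pos j).1 := by
  have hst := (hBL j).1.1
  unfold xF
  refine le_of_eq_of_le (by congr) (push (I := I) (pos := pos) _ (F_h_down hord t) _ (I.r j).w hst.1 (I.w_pos j)
    (fun f hf => (F_pos hord hBL f hf.1).1) ?_)
  intro f hf
  have hy := (F_pos hord hBL f hf.1).2
  have hne : j ≠ f := fun h => hj (h ▸ hf.1)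
  rcases sep hBL hne with h | h | h | h
  · exact Or.inr h
  · exact Or.inl h
  · rw [hy] at h; linarith [hf.2]
  · rw [hy] at h; linarith [hst.2.2, I.h_pos j]

/-- A rectangle of `F` higher than `t` ends before `xF t`. -/
lemma le_xF (hord : d.IsOrdered) (hBL : I.IsBL pos) {f : Fin n} (hf : f ∈ d.F) {t : ℝ}
    (ht : t < (I.r f).h) : (pos f).1 + (I.r f).w ≤ xF I d t := by
  have h1 : ∑ j ∈ insert f (Finset.Iio f), (I.r j).w ≤ xF I d t := by
    apply Finset.sum_le_sum_of_subset_of_nonneg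
    · intro j hj
      rw [Finset.mem_insert, Finset.mem_Iio] at hj
      simp only [Finset.mem_filter, Finset.mem_univ, true_and]
      exact F_h_down hord t j f (by rcases hj with h | h; exacts [h.le, h.le]) ⟨hf, ht⟩
    · intro j _ _; exact (I.w_pos j).le
  rw [Finset.sum_insert (by simp)] at h1
  rw [(F_pos hord hBL f hf).1]
  linarith

/-- Every rectangle not touching the left boundary has a left supporter. -/
lemma exists_left (hBL : I.IsBL pos) {q : Fin n} (hq : (pos q).1 ≠ 0) :
    ∃ j, I.IsLeftSupporter pos q j := by
  by_contra hc
  push Not at hc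
  have hst := (hBL q).1.1
  have hpos : 0 < (pos q).1 := lt_of_le_of_ne hst.1 (Ne.symm hq)
  let S : Finset ℝ := insert 0 ((Finset.univ.filter (fun j : Fin n => j < q ∧
    (pos j).1 + (I.r j).w ≤ (pos q).1 ∧
    (pos j).2 < (pos q).2 + (I.r q).h ∧ (pos q).2 < (pos j).2 + (I.r j).h)).image
      (fun j => (pos j).1 + (I.r j).w))
  have hS : S.Nonempty := Finset.insert_nonempty _ _
  have hmem := S.max'_mem hS
  have hlt : S.max' hS < (pos q).1 := by
    rw [Finset.max'_lt_iff]
    intro y hy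
    simp only [S, Finset.mem_insert, Finset.mem_image, Finset.mem_filter, Finset.mem_univ,
      true_and] at hy
    rcases hy with h | ⟨j, ⟨h1, h2, h3, h4⟩, rfl⟩
    · rw [h]; exact hpos
    · refine lt_of_le_of_ne h2 fun h => hc j ⟨h1, h, h3, h4⟩
  have h0 : 0 ≤ S.max' hS := S.le_max' 0 (Finset.mem_insert_self _ _)
  have hfeas : I.FeasibleAt pos q (S.max' hS, (pos q).2) := by
    refine ⟨⟨h0, ?_, hst.2.2⟩, ?_⟩
    · have := hst.2.1
      simp only; linarith
    · intro j hj
      apply disjoint_box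
      simp only
      rcases sep hBL (ne_of_gt hj) with h | h | h | h
      · by_cases h3 : (pos j).2 < (pos q).2 + (I.r q).h
        · by_cases h4 : (pos q).2 < (pos j).2 + (I.r j).h
          · left
            apply S.le_max'
            apply Finset.mem_insert_of_mem
            apply Finset.mem_image_of_mem (fun j => (pos j).1 + (I.r j).w)
            simp only [Finset.mem_filter, Finset.mem_univ, true_and]
            exact ⟨hj, h, h3, h4⟩
          · exact Or.inr (Or.inr (Or.inl (not_lt.mp h4)))
        · exact Or.inr (Or.inr (Or.inr (not_lt.mp h3)))
      · exact Or.inr (Or.inl (by linarith))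
      · exact Or.inr (Or.inr (Or.inl h))
      · exact Or.inr (Or.inr (Or.inr h))
  rcases (hBL q).2 _ hfeas with h | h
  · exact lt_irrefl _ h
  · exact absurd h.2 (not_le.mpr hlt)

/-- Total width bound for the occupied part. -/
lemma sum_le_occ (hBL : I.IsBL pos) {t : ℝ} (S : Finset (Fin n))
    (hS : ∀ j ∈ S, I.Intersects pos j t) :
    ∑ j ∈ S, (I.r j).w ≤ (volume (I.occupied pos t)).toReal := by
  have hfin : volume (I.occupied pos t) ≠ ⊤ := by
    have : I.occupied pos t ⊆ Set.Icc 0 I.W := by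
      intro x hx
      simp only [SPInstance.occupied, Set.mem_iUnion] at hx
      obtain ⟨j, _, hx⟩ := hx
      have hst := (hBL j).1.1
      exact ⟨hst.1.trans hx.1, hx.2.trans hst.2.1⟩
    exact ne_top_of_le_ne_top (by simp) (measure_mono this)
  have h1 : volume (⋃ j ∈ S, Set.Ioo (pos j).1 ((pos j).1 + (I.r j).w))
      = ∑ j ∈ S, volume (Set.Ioo (pos j).1 ((pos j).1 + (I.r j).w)) := by
    apply measure_biUnion_finset
    · intro i hi j hj hij
      have hi' := hS i hi
      have hj' := hS j hj
      rw [Function.onFun, Set.disjoint_left]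
      rintro x ⟨h1, h2⟩ ⟨h3, h4⟩
      rcases sep hBL hij with h | h | h | h
      · linarith
      · linarith
      · linarith [hi'.1, hj'.2]
      · linarith [hi'.2, hj'.1]
    · intro j _; exact measurableSet_Ioo
  have h2 : volume (⋃ j ∈ S, Set.Ioo (pos j).1 ((pos j).1 + (I.r j).w))
      ≤ volume (I.occupied pos t) := by
    apply measure_mono
    intro x hx
    simp only [Set.mem_iUnion] at hx
    obtain ⟨j, hj, hx⟩ := hx
    simp only [SPInstance.occupied, Set.mem_iUnion]
    exact ⟨j, hS j hj, ⟨hx.1.le, hx.2.le⟩⟩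
  rw [h1] at h2
  have h3 : ∑ j ∈ S, volume (Set.Ioo (pos j).1 ((pos j).1 + (I.r j).w))
      = ENNReal.ofReal (∑ j ∈ S, (I.r j).w) := by
    rw [ENNReal.ofReal_sum_of_nonneg fun j _ => (I.w_pos j).le]
    apply Finset.sum_congr rfl
    intro j _
    rw [Real.volume_Ioo]; congr 1; ring
  rw [h3] at h2
  exact (ENNReal.ofReal_le_iff_le_toReal hfin).mp h2

/-- Facts about a line of the region under consideration, with witness `m`. -/
structure Line (I : SPInstance n) (d : FQW I) (pos : Fin n → ℝ × ℝ) (iL : Fin n)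
    (t : ℝ) (m : Fin n) : Prop where
  mQ : m ∈ d.Q
  mL : m ≤ iL
  below : ∀ j, j < m → (pos j).2 < t
  above : t < (pos m).2
  tpos : 0 ≤ t
  mem : ∀ i, i ∈ TypeOf I d pos t ↔ i ∈ d.Q ∧ I.Intersects pos i t ∧ i < m
  cases : ∀ j, j < m → j ∈ d.F ∨ j ∈ d.Q
  wle : ∀ j, j ∈ d.Q → j < m → (I.r m).w ≤ (I.r j).w
  wge : ∀ j, j ∈ d.Q → m ≤ j → (I.r j).w ≤ (I.r m).w

lemma Q_not_F {i : Fin n} (h : i ∈ d.Q) : i ∉ d.F := by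
  simp only [FQW.Q, Finset.mem_filter] at h
  exact h.2.1

lemma line_of (hord : d.IsOrdered) (hBL : I.IsBL pos) {iT iL : Fin n}
    (hiT : IsTopRect I d pos iT) (hiL : IsLeftRect I d pos iT iL) {k : ℕ} {t : ℝ}
    (ht : InLk I d pos iL k t) : ∃ m, Line I d pos iL t m := by
  obtain ⟨hp, ⟨m, hm1, hm2, hm3, hm4⟩, -⟩ := ht
  have hLQ : iL ∈ d.Q := by
    rcases hiL with h | h
    · exact h.1
    · rw [h.2]; exact hiT.1
  have hLQ' := (hord.2.1 iL).mp hLQ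
  have hmL := Fin.le_def.mp hm2
  have hmQ : m ∈ d.Q := (hord.2.1 m).mpr ⟨by omega, by omega⟩
  have hle : ∀ j, j < m → (pos j).2 ≤ t := by
    intro j hj
    refine le_trans ?_ hm3
    exact le_ciSup (f := fun j : {j : Fin n // (j : ℕ) < m} => (pos (j : Fin n)).2)
      (Set.finite_range _).bddAbove ⟨j, Fin.lt_def.mp hj⟩
  refine ⟨m, hmQ, hm2, fun j hj => lt_of_le_of_ne (hle j hj) (hp j).1.symm, hm4, ?_, ?_, ?_,
    ?_, ?_⟩
  · have h0 : (0 : ℕ) < n := by have := m.2; omega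
    have hlt : (⟨0, h0⟩ : Fin n) < m := Fin.lt_def.mpr (by simp only; omega)
    exact (hBL ⟨0, h0⟩).1.1.2.2.trans (hle _ hlt)
  · intro i
    simp only [TypeOf, Finset.mem_filter, Finset.mem_univ, true_and]
    constructor
    · rintro ⟨h1, h2, h3⟩
      refine ⟨h1, h2, ?_⟩
      by_contra hc
      exact absurd (h3 m (not_lt.mp hc)) (not_le.mpr hm4)
    · rintro ⟨h1, h2, h3⟩
      exact ⟨h1, h2, fun j hj => hle j (hj.trans_lt h3)⟩
  · intro j hj
    have := Fin.lt_def.mp hj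
    rw [hord.1, hord.2.1]
    omega
  · intro j hjQ hj
    exact hord.2.2.2 j m ((hord.2.1 j).mp hjQ).1 (Fin.le_def.mp hj.le)
      ((hord.2.1 m).mp hmQ).2
  · intro j hjQ hj
    exact hord.2.2.2 m j ((hord.2.1 m).mp hmQ).1 (Fin.le_def.mp hj)
      ((hord.2.1 j).mp hjQ).2

/-- No gap right of `xF` has width `w_m`. -/
lemma Line.gap (hord : d.IsOrdered) (hBL : I.IsBL pos) {iL m : Fin n} {t : ℝ}
    (hl : Line I d pos iL t m) {u : ℝ} (hu : xF I d t ≤ u) (huW : u + (I.r m).w ≤ I.W) :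
    ∃ j ∈ TypeOf I d pos t, (pos j).1 < u + (I.r m).w ∧ u < (pos j).1 + (I.r j).w := by
  have hnf : ¬ I.FeasibleAt pos m (u, t) := by
    intro hf
    have := hl.above
    rcases (hBL m).2 _ hf with h | h
    · simp only at h; linarith
    · have := h.1; simp only at this; linarith
  have hst : I.InStrip m (u, t) := ⟨(xF_nonneg t).trans hu, huW, hl.tpos⟩
  have : ∃ j, j < m ∧ ¬ Disjoint (openBox (I.r m) (u, t)) (openBox (I.r j) (pos j)) := by
    by_contra hc
    push Not at hc
    exact hnf ⟨hst, hc⟩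
  obtain ⟨j, hj, hd⟩ := this
  obtain ⟨h1, h2, h3, h4⟩ := exists_overlap hd
  simp only at h1 h2 h3 h4
  rcases hl.cases j hj with hF | hQ
  · have hy := (F_pos hord hBL j hF).2
    have := le_xF hord hBL hF (t := t) (by linarith)
    linarith
  · exact ⟨j, (hl.mem j).mpr ⟨hQ, ⟨hl.below j hj, h3⟩, hj⟩, h2, h1⟩

lemma Line.left_gap (hord : d.IsOrdered) (hBL : I.IsBL pos) {iL m q : Fin n} {t : ℝ}
    (hl : Line I d pos iL t m) (hq : IsLM I d pos t q) :
    (pos q).1 < xF I d t + (I.r m).w := by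
  by_contra hc
  push Not at hc
  have hst := (hBL q).1.1
  obtain ⟨j, hj, h1, -⟩ := hl.gap hord hBL le_rfl (by linarith [hst.2.1, I.w_pos q])
  linarith [hq.2 j hj]

lemma Line.cover (hord : d.IsOrdered) (hBL : I.IsBL pos) {iL m q : Fin n} {t : ℝ}
    (hl : Line I d pos iL t m) (hq : IsLM I d pos t q) :
    I.W - (pos q).1 ≤ ∑ i ∈ TypeOf I d pos t, (I.r i).w +
      (TypeOf I d pos t).card * (I.r m).w := by
  have hqm := (hl.mem q).mp hq.1
  have hxq : xF I d t ≤ (pos q).1 := xF_le hord hBL (Q_not_F hqm.1) hqm.2.1.1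
  have hsub : Set.Ioc ((pos q).1 - (I.r m).w) (I.W - (I.r m).w) ⊆
      ⋃ j ∈ TypeOf I d pos t, Set.Ioo ((pos j).1 - (I.r m).w) ((pos j).1 + (I.r j).w) := by
    rintro u ⟨hu1, hu2⟩
    simp only [Set.mem_iUnion]
    by_cases huq : u < (pos q).1
    · exact ⟨q, hq.1, hu1, by linarith [I.w_pos q]⟩
    · obtain ⟨j, hj, h1, h2⟩ := hl.gap hord hBL (u := u) (by linarith) (by linarith)
      exact ⟨j, hj, by linarith, h2⟩
  have h1 := (measure_mono (μ := volume) hsub).trans (measure_biUnion_finset_le _ _)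
  simp only [Real.volume_Ioc, Real.volume_Ioo] at h1
  rw [← ENNReal.ofReal_sum_of_nonneg (fun j _ => by linarith [I.w_pos j, I.w_pos m])] at h1
  have h2 : 0 ≤ ∑ j ∈ TypeOf I d pos t,
      ((pos j).1 + (I.r j).w - ((pos j).1 - (I.r m).w)) :=
    Finset.sum_nonneg fun j _ => by linarith [I.w_pos j, I.w_pos m]
  rw [ENNReal.ofReal_le_ofReal_iff h2] at h1
  have h3 : ∑ j ∈ TypeOf I d pos t, ((pos j).1 + (I.r j).w - ((pos j).1 - (I.r m).w))
      = ∑ i ∈ TypeOf I d pos t, (I.r i).w + (TypeOf I d pos t).card * (I.r m).w := by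
    rw [← nsmul_eq_mul, ← Finset.sum_const, ← Finset.sum_add_distrib]
    apply Finset.sum_congr rfl
    intro j _; ring
  linarith

lemma Line.card_le {iL m : Fin n} {t : ℝ} (hl : Line I d pos iL t m) :
    (TypeOf I d pos t).card * (I.r m).w ≤ ∑ i ∈ TypeOf I d pos t, (I.r i).w := by
  rw [← nsmul_eq_mul, ← Finset.sum_const]
  apply Finset.sum_le_sum
  intro i hi
  have := (hl.mem i).mp hi
  exact hl.wle i this.1 this.2.2

/-- The leftmost rectangle of a line has a left supporter in `F`. -/
lemma Line.supp (hord : d.IsOrdered) (hBL : I.IsBL pos) {iT iL m q : Fin n} {t : ℝ}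
    (hiL : IsLeftRect I d pos iT iL)
    (hl : Line I d pos iL t m) (hq : IsLM I d pos t q) :
    ∃ f ∈ d.F, (pos f).1 + (I.r f).w = (pos q).1 ∧ (pos q).2 < (I.r f).h := by
  have hqm := (hl.mem q).mp hq.1
  have hne : (pos q).1 ≠ 0 := by
    rcases hiL with h | h
    · intro h0
      exact absurd (h.2.2 q hqm.1 h0) (not_le.mpr (hqm.2.2.trans_le hl.mL))
    · exact h.1 q hqm.1
  obtain ⟨j, h1, h2, h3, h4⟩ := exists_left hBL hne
  have hjm := h1.trans hqm.2.2
  rcases hl.cases j hjm with hF | hQ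
  · refine ⟨j, hF, h2, ?_⟩
    rw [(F_pos hord hBL j hF).2] at h4
    linarith
  · have a1 := xF_le hord hBL (Q_not_F hQ) (hl.below j hjm)
    have a2 := hl.wle j hQ hjm
    have a3 := hl.left_gap hord hBL hq
    linarith

/-- Sufficient condition for being half occupied. -/
lemma Line.half (hord : d.IsOrdered) (hBL : I.IsBL pos) {iL m q : Fin n} {t : ℝ}
    (hl : Line I d pos iL t m) (hq : IsLM I d pos t q)
    (h : I.W ≤ 2 * (xF I d t + ∑ i ∈ TypeOf I d pos t, (I.r i).w)) :
    1 / 2 ≤ I.occFrac pos t := by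
  have hqm := (hl.mem q).mp hq.1
  have ht0 : 0 < t := lt_of_le_of_lt (hBL q).1.1.2.2 hqm.2.1.1
  have hdisj : Disjoint (Finset.univ.filter (fun i => i ∈ d.F ∧ t < (I.r i).h))
      (TypeOf I d pos t) := by
    rw [Finset.disjoint_left]
    intro i hi hi'
    simp only [Finset.mem_filter, Finset.mem_univ, true_and] at hi
    exact Q_not_F ((hl.mem i).mp hi').1 hi.1
  have := sum_le_occ hBL (t := t)
    (Finset.univ.filter (fun i => i ∈ d.F ∧ t < (I.r i).h) ∪ TypeOf I d pos t) (by
      intro j hj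
      rw [Finset.mem_union] at hj
      rcases hj with hj | hj
      · simp only [Finset.mem_filter, Finset.mem_univ, true_and] at hj
        have hy := (F_pos hord hBL j hj.1).2
        exact ⟨by rw [hy]; exact ht0, by rw [hy]; linarith [hj.2]⟩
      · exact ((hl.mem j).mp hj).2.1)
  rw [Finset.sum_union hdisj] at this
  unfold SPInstance.occFrac
  rw [le_div_iff₀ I.W_pos]
  unfold xF at h
  linarith

end HalfOcc

/-- **Lemma.** For every line `ℓ ∈ L^k`, either `LM(ℓ) = LM^k` or `ℓ` is at
least half occupied. -/
theorem half_occupied_or_LMk {n : ℕ} (I : SPInstance n) (d : FQW I)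
    (hord : d.IsOrdered) (pos : Fin n → ℝ × ℝ) (hBL : I.IsBL pos)
    (hQ : d.Q.Nonempty) (iT iL : Fin n) (hiT : IsTopRect I d pos iT)
    (hiL : IsLeftRect I d pos iT iL)
    (k : ℕ) (hk : 1 ≤ k) (t : ℝ) (ht : InLk I d pos iL k t)
    (iLM : Fin n) (hLM : IsLM I d pos t iLM)
    (iLMk : Fin n) (hLMk : IsLMk I d pos iL k iLMk) :
    iLM = iLMk ∨ 1 / 2 ≤ I.occFrac pos t := by
  by_cases hne : iLM = iLMk
  · exact Or.inl hne
  right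
  obtain ⟨m, hl⟩ := HalfOcc.line_of hord hBL hiT hiL ht
  obtain ⟨⟨t', ht', hLM'⟩, hmin⟩ := hLMk
  obtain ⟨m', hl'⟩ := HalfOcc.line_of hord hBL hiT hiL ht'
  have hxy := hmin iLM ⟨t, ht, hLM⟩
  have hq := (hl.mem iLM).mp hLM.1
  have hp := (hl'.mem iLMk).mp hLM'.1
  have hxle : (pos iLMk).1 ≤ (pos iLM).1 := by
    rcases hxy with h | h
    · exact h.le
    · exact h.1.le
  have hcov := hl.cover hord hBL hLM
  have hcard := hl.card_le
  have hgap := hl.left_gap hord hBL hLM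
  apply hl.half hord hBL hLM
  have hx0 := HalfOcc.xF_nonneg (I := I) (d := d) t
  obtain ⟨f, hfF, hf1, hf2⟩ := hl.supp hord hBL hiL hLM
  obtain ⟨s, hsF, hs1, hs2⟩ := hl'.supp hord hBL hiL hLM'
  rcases lt_or_ge iLMk m with hpm | hpm
  · -- `LM^k` precedes `r_m`: impossible
    exfalso
    have hyp := hl.below _ hpm
    have hni : ¬ I.Intersects pos iLMk t := by
      intro hi
      have := hLM.2 iLMk ((hl.mem iLMk).mpr ⟨hp.1, hi, hpm⟩)
      rcases HalfOcc.sep hBL hne with h | h | h | h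
      · linarith [I.w_pos iLMk]
      · linarith [I.w_pos iLM]
      · linarith [hi.2, hq.2.1.1]
      · linarith [hi.1, hq.2.1.2]
    have htop : (pos iLMk).2 + (I.r iLMk).h ≤ t := by
      by_contra hc
      exact hni ⟨hyp, not_le.mp hc⟩
    have a1 := HalfOcc.xF_le hord hBL (HalfOcc.Q_not_F hp.1) hyp
    have a2 := hl.wle _ hp.1 hpm
    have habove : (pos iLMk).2 + (I.r iLMk).h ≤ (pos iLM).2 := by
      rcases HalfOcc.sep hBL hne with h | h | h | h
      · linarith
      · linarith [I.w_pos iLM]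
      · exact h
      · linarith [hq.2.1.2, I.h_pos iLMk]
    have b1 := hp.2.1.2
    have b2 := HalfOcc.le_xF hord hBL hfF (t := t') (by linarith)
    have b3 := HalfOcc.xF_le hord hBL (HalfOcc.Q_not_F hp.1) hp.2.1.1
    rcases hxy with h | h
    · linarith
    · linarith [h.2, I.h_pos iLMk]
  · -- `LM^k` does not precede `r_m`
    have htt : t < t' := hl.above.trans (hl'.below m (hpm.trans_lt hp.2.2))
    have hcov' := hl'.cover hord hBL hLM'
    have hcard' := hl'.card_le
    have hpT : iLMk ∉ TypeOf I d pos t := fun h =>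
      absurd ((hl.mem _).mp h).2.2 (not_lt.mpr hpm)
    have hnew : ∀ i ∈ TypeOf I d pos t' \ TypeOf I d pos t, (I.r i).w - (I.r m).w ≤ 0 := by
      intro i hi
      rw [Finset.mem_sdiff] at hi
      have h1 := (hl'.mem i).mp hi.1
      rcases lt_or_ge i m with him | him
      · exact absurd ((hl.mem i).mpr ⟨h1.1, ⟨hl.below i him, htt.trans h1.2.1.2⟩, him⟩) hi.2
      · linarith [hl.wge i h1.1 him]
    have hA : ∑ i ∈ TypeOf I d pos t' \ TypeOf I d pos t, ((I.r i).w - (I.r m).w)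
        ≤ (I.r iLMk).w - (I.r m).w := by
      have hmem : iLMk ∈ TypeOf I d pos t' \ TypeOf I d pos t :=
        Finset.mem_sdiff.mpr ⟨hLM'.1, hpT⟩
      rw [← Finset.add_sum_erase _ _ hmem]
      have := Finset.sum_nonpos (s := (TypeOf I d pos t' \ TypeOf I d pos t).erase iLMk)
        (f := fun i => (I.r i).w - (I.r m).w)
        (fun i hi => hnew i (Finset.mem_of_mem_erase hi))
      linarith
    have hB : 0 ≤ ∑ i ∈ TypeOf I d pos t \ TypeOf I d pos t', ((I.r i).w - (I.r m).w) := by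
      apply Finset.sum_nonneg
      intro i hi
      have h1 := (hl.mem i).mp (Finset.mem_sdiff.mp hi).1
      linarith [hl.wle i h1.1 h1.2.2]
    have e1 := Finset.sum_inter_add_sum_sdiff (TypeOf I d pos t') (TypeOf I d pos t)
      (fun i => (I.r i).w - (I.r m).w)
    have e2 := Finset.sum_inter_add_sum_sdiff (TypeOf I d pos t) (TypeOf I d pos t')
      (fun i => (I.r i).w - (I.r m).w)
    rw [Finset.inter_comm] at e2
    have e3 : ∑ i ∈ TypeOf I d pos t', ((I.r i).w - (I.r m).w)
        = ∑ i ∈ TypeOf I d pos t', (I.r i).w - k * (I.r m).w := by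
      rw [Finset.sum_sub_distrib, Finset.sum_const, nsmul_eq_mul, ht'.2.2]
    have e4 : ∑ i ∈ TypeOf I d pos t, ((I.r i).w - (I.r m).w)
        = ∑ i ∈ TypeOf I d pos t, (I.r i).w - k * (I.r m).w := by
      rw [Finset.sum_sub_distrib, Finset.sum_const, nsmul_eq_mul, ht.2.2]
    have hwp : (I.r iLMk).w ≤ (I.r m).w := hl.wge _ hp.1 hpm
    rcases le_or_gt t (pos iLMk).2 with hyt | hyt
    · have := HalfOcc.le_xF hord hBL hsF (t := t) (by linarith)
      linarith
    · have b1 := hp.2.1.2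
      have hsep : (pos iLMk).1 + (I.r iLMk).w ≤ (pos iLM).1 := by
        rcases HalfOcc.sep hBL hne with h | h | h | h
        · exact h
        · linarith [I.w_pos iLM]
        · linarith [hq.2.1.1]
        · linarith [hq.2.1.2]
      linarith
end

section
/- Let (W, r_1, …, r_n) be a Strip Packing instance whose rectangles are listed in the FQW-ordering with Q ≠ ∅, and consider its BL packing. Let k ≥ 1. Every line ℓ ∈ L^k that intersects the rectangle LM^k has occupied fraction at least k/(2k+1), and every line ℓ ∈ L^k that does not intersect LM^k has occupied fraction at least 1/2. -/
open scoped Classical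
open MeasureTheory

section Helpers

variable {n : ℕ} {I : SPInstance n} {d : FQW I} {pos : Fin n → ℝ × ℝ}

lemma box_disj_of {R R' : Rect} {p p' : ℝ × ℝ}
    (h : p.1 + R.w ≤ p'.1 ∨ p'.1 + R'.w ≤ p.1 ∨ p.2 + R.h ≤ p'.2 ∨ p'.2 + R'.h ≤ p.2) :
    Disjoint (openBox R p) (openBox R' p') := by
  rw [Set.disjoint_left]
  rintro ⟨a, b⟩ h1 h2
  simp only [openBox, Set.mem_prod, Set.mem_Ioo] at h1 h2
  obtain ⟨⟨_, _⟩, _, _⟩ := h1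
  obtain ⟨⟨_, _⟩, _, _⟩ := h2
  rcases h with h | h | h | h <;> linarith

lemma box_sep {R R' : Rect} {p p' : ℝ × ℝ} (hw : 0 < R.w) (hw' : 0 < R'.w)
    (hh : 0 < R.h) (hh' : 0 < R'.h) (h : Disjoint (openBox R p) (openBox R' p')) :
    p.1 + R.w ≤ p'.1 ∨ p'.1 + R'.w ≤ p.1 ∨ p.2 + R.h ≤ p'.2 ∨ p'.2 + R'.h ≤ p.2 := by
  by_contra! hc
  obtain ⟨h1, h2, h3, h4⟩ := hc
  obtain ⟨a, ha1, ha2⟩ : ∃ a, max p.1 p'.1 < a ∧ a < min (p.1 + R.w) (p'.1 + R'.w) := by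
    apply exists_between
    simp only [max_lt_iff, lt_min_iff]
    refine ⟨⟨?_, ?_⟩, ?_, ?_⟩ <;> linarith
  obtain ⟨b, hb1, hb2⟩ : ∃ b, max p.2 p'.2 < b ∧ b < min (p.2 + R.h) (p'.2 + R'.h) := by
    apply exists_between
    simp only [max_lt_iff, lt_min_iff]
    refine ⟨⟨?_, ?_⟩, ?_, ?_⟩ <;> linarith
  simp only [max_lt_iff, lt_min_iff] at ha1 ha2 hb1 hb2
  have hd := Set.disjoint_left.1 h
  refine @hd (a, b) ?_ ?_
  · exact ⟨⟨ha1.1, ha2.1⟩, hb1.1, hb2.1⟩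
  · exact ⟨⟨ha1.2, ha2.2⟩, hb1.2, hb2.2⟩

lemma bl_sep (hBL : I.IsBL pos) {i j : Fin n} (hij : i ≠ j) :
    (pos i).1 + (I.r i).w ≤ (pos j).1 ∨ (pos j).1 + (I.r j).w ≤ (pos i).1 ∨
    (pos i).2 + (I.r i).h ≤ (pos j).2 ∨ (pos j).2 + (I.r j).h ≤ (pos i).2 := by
  rcases lt_or_gt_of_ne hij with h | h
  · have := box_sep (I.w_pos j) (I.w_pos i) (I.h_pos j) (I.h_pos i) ((hBL j).1.2 i h)
    tauto
  · exact box_sep (I.w_pos i) (I.w_pos j) (I.h_pos i) (I.h_pos j) ((hBL i).1.2 j h)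

lemma greedyF_sum_le (I : SPInstance n) (σ : Equiv.Perm (Fin n)) :
    ∑ f ∈ I.greedyF σ, (I.r f).w ≤ I.W := by
  unfold SPInstance.greedyF
  have key : ∀ (l : List (Fin n)) (F : Finset (Fin n)), ∑ f ∈ F, (I.r f).w ≤ I.W →
      ∑ f ∈ l.foldl (fun F k =>
        if (I.r (σ k)).w + ∑ f ∈ F, (I.r f).w ≤ I.W then insert (σ k) F else F) F,
        (I.r f).w ≤ I.W := by
    intro l
    induction l with
    | nil => intro F hF; simpa using hF
    | cons a l ih =>
      intro F hF
      rw [List.foldl_cons]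
      apply ih
      split_ifs with h
      · by_cases hm : σ a ∈ F
        · rw [Finset.insert_eq_of_mem hm]; exact hF
        · rw [Finset.sum_insert hm]; exact h
      · exact hF
  exact key _ _ (by simpa using I.W_pos.le)

/-- total width of the first `i` rectangles -/
noncomputable def preW (I : SPInstance n) (i : ℕ) : ℝ :=
  ∑ j ∈ Finset.univ.filter (fun j : Fin n => (j : ℕ) < i), (I.r j).w

lemma preW_mono (I : SPInstance n) {i j : ℕ} (h : i ≤ j) : preW I i ≤ preW I j := by
  unfold preW
  apply Finset.sum_le_sum_of_subset_of_nonneg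
  · intro a ha
    simp only [Finset.mem_filter, Finset.mem_univ, true_and] at ha ⊢
    omega
  · intro a _ _
    exact (I.w_pos a).le

lemma preW_succ (I : SPInstance n) (i : Fin n) :
    preW I ((i : ℕ) + 1) = preW I i + (I.r i).w := by
  unfold preW
  have : Finset.univ.filter (fun j : Fin n => (j : ℕ) < (i : ℕ) + 1) =
      insert i (Finset.univ.filter (fun j : Fin n => (j : ℕ) < (i : ℕ))) := by
    ext a
    simp only [Finset.mem_filter, Finset.mem_univ, true_and, Finset.mem_insert, Fin.ext_iff]
    omega
  rw [this, Finset.sum_insert (by simp)]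
  ring

lemma preW_card (hord : d.IsOrdered) : preW I d.F.card ≤ I.W := by
  have : Finset.univ.filter (fun j : Fin n => (j : ℕ) < d.F.card) = d.F := by
    ext a
    simp [hord.1 a]
  unfold preW
  rw [this]
  exact greedyF_sum_le I d.σ

lemma posF_aux (hord : d.IsOrdered) (hBL : I.IsBL pos) :
    ∀ N : ℕ, ∀ i : Fin n, (i : ℕ) = N → (i : ℕ) < d.F.card →
      (pos i).1 = preW I i ∧ (pos i).2 = 0 := by
  intro N
  induction N using Nat.strong_induction_on with
  | _ N ih =>
    intro i hi hia
    have ih' : ∀ j : Fin n, j < i → (pos j).1 = preW I j ∧ (pos j).2 = 0 := by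
      intro j hj
      have hj' : (j : ℕ) < (i : ℕ) := hj
      exact ih j (by omega) j rfl (by omega)
    have hp0 : 0 ≤ preW I i := Finset.sum_nonneg fun a _ => (I.w_pos a).le
    have hfeas : I.FeasibleAt pos i (preW I i, 0) := by
      refine ⟨⟨hp0, ?_, le_rfl⟩, ?_⟩
      · have h1 := preW_succ I i
        have h2 : preW I ((i : ℕ) + 1) ≤ preW I d.F.card := preW_mono I hia
        have h3 := preW_card hord
        simp only
        linarith
      · intro j hj
        apply box_disj_of
        right; left
        have h1 := preW_succ I j
        have hj' : (j : ℕ) < (i : ℕ) := hj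
        have h2 : preW I ((j : ℕ) + 1) ≤ preW I i := preW_mono I hj'
        rw [(ih' j hj).1]
        simp only
        linarith
    obtain ⟨⟨hx0, hxW, hy0⟩, hdis⟩ := (hBL i).1
    have hmin := (hBL i).2 _ hfeas
    simp only at hmin
    have hy : (pos i).2 = 0 := by
      rcases hmin with h | h
      · linarith
      · exact h.1
    have hx : (pos i).1 ≤ preW I i := by
      rcases hmin with h | h
      · linarith
      · exact h.2
    have hge : ∀ M : ℕ, M ≤ (i : ℕ) → preW I M ≤ (pos i).1 := by
      intro M
      induction M with
      | zero => intro _; simpa [preW] using hx0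
      | succ M ihM =>
        intro hM
        have hM' := ihM (by omega)
        let j : Fin n := ⟨M, by omega⟩
        have hj : j < i := by
          show M < (i : ℕ)
          omega
        have hjs := preW_succ I j
        have hsep := bl_sep hBL (ne_of_lt hj)
        have hwi := I.w_pos i
        have hhi := I.h_pos i
        have hhj := I.h_pos j
        obtain ⟨e1, e2⟩ := ih' j hj
        rw [e1, e2, hy] at hsep
        have hjM : preW I (j : ℕ) = preW I M := rfl
        have hjM' : preW I ((j : ℕ) + 1) = preW I (M + 1) := rfl
        rcases hsep with h | h | h | h <;> linarith
    exact ⟨le_antisymm hx (hge _ le_rfl), hy⟩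

lemma posF (hord : d.IsOrdered) (hBL : I.IsBL pos) {i : Fin n} (hi : i ∈ d.F) :
    (pos i).1 = preW I i ∧ (pos i).2 = 0 :=
  posF_aux hord hBL _ i rfl ((hord.1 i).1 hi)

lemma sum_le_occ (hBL : I.IsBL pos) {t : ℝ} (S : Finset (Fin n))
    (hS : ∀ j ∈ S, I.Intersects pos j t) :
    ∑ j ∈ S, (I.r j).w ≤ (volume (I.occupied pos t)).toReal := by
  have hfin : volume (I.occupied pos t) ≠ ⊤ := by
    have hsub : I.occupied pos t ⊆ Set.Icc 0 I.W := by
      intro z hz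
      simp only [SPInstance.occupied, Set.mem_iUnion, Set.mem_Icc] at hz
      obtain ⟨j, _, h1, h2⟩ := hz
      obtain ⟨⟨hx0, hxW, hy0⟩, _⟩ := (hBL j).1
      exact ⟨by linarith, by linarith⟩
    refine ne_top_of_le_ne_top ?_ (measure_mono hsub)
    simp
  rw [← ENNReal.ofReal_le_iff_le_toReal hfin,
    ENNReal.ofReal_sum_of_nonneg (fun j _ => (I.w_pos j).le)]
  calc ∑ j ∈ S, ENNReal.ofReal (I.r j).w
      = ∑ j ∈ S, volume (Set.Ioo (pos j).1 ((pos j).1 + (I.r j).w)) := by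
        apply Finset.sum_congr rfl
        intro j _
        rw [Real.volume_Ioo]
        congr 1
        ring
    _ = volume (⋃ j ∈ S, Set.Ioo (pos j).1 ((pos j).1 + (I.r j).w)) := by
        rw [measure_biUnion_finset]
        · intro i hi j hj hij
          have hi' := hS i hi
          have hj' := hS j hj
          have hsep := bl_sep hBL hij
          obtain ⟨a1, a2⟩ := hi'
          obtain ⟨b1, b2⟩ := hj'
          simp only [Function.onFun]
          rw [Set.disjoint_left]
          rintro z ⟨z1, z2⟩ ⟨z3, z4⟩
          rcases hsep with h | h | h | h <;> linarith
        · intro j _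
          exact measurableSet_Ioo
    _ ≤ volume (I.occupied pos t) := by
        apply measure_mono
        intro z hz
        simp only [Set.mem_iUnion] at hz
        obtain ⟨j, hj, hz⟩ := hz
        simp only [SPInstance.occupied, Set.mem_iUnion]
        exact ⟨j, hS j hj, Set.Ioo_subset_Icc_self hz⟩

lemma cover_bound {S : Finset (Fin n)} {c δ : ℝ} (hδ : 0 ≤ δ)
    (hcov : ∀ z, c ≤ z → z ≤ I.W →
      ∃ j ∈ S, (pos j).1 ≤ z ∧ z ≤ (pos j).1 + (I.r j).w + δ) :
    I.W - c ≤ ∑ j ∈ S, (I.r j).w + S.card * δ := by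
  have hnn : ∀ j ∈ S, 0 ≤ (I.r j).w + δ := fun j _ => add_nonneg (I.w_pos j).le hδ
  have h1 : ENNReal.ofReal (I.W - c) ≤ ENNReal.ofReal (∑ j ∈ S, ((I.r j).w + δ)) := by
    rw [ENNReal.ofReal_sum_of_nonneg hnn, ← Real.volume_Icc]
    calc volume (Set.Icc c I.W)
        ≤ volume (⋃ j ∈ S, Set.Icc (pos j).1 ((pos j).1 + (I.r j).w + δ)) := by
          apply measure_mono
          intro z hz
          obtain ⟨j, hj, h⟩ := hcov z hz.1 hz.2
          simp only [Set.mem_iUnion]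
          exact ⟨j, hj, h⟩
      _ ≤ ∑ j ∈ S, volume (Set.Icc (pos j).1 ((pos j).1 + (I.r j).w + δ)) :=
          measure_biUnion_finset_le _ _
      _ = ∑ j ∈ S, ENNReal.ofReal ((I.r j).w + δ) := by
          apply Finset.sum_congr rfl
          intro j _
          rw [Real.volume_Icc]
          congr 1
          ring
  have h2 := (ENNReal.ofReal_le_ofReal_iff (Finset.sum_nonneg hnn)).1 h1
  rw [Finset.sum_add_distrib, Finset.sum_const, nsmul_eq_mul] at h2
  exact h2

/-- The facts about a line of the region `H_m` that the proof uses. -/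
structure LineData (I : SPInstance n) (d : FQW I) (pos : Fin n → ℝ × ℝ) (iL : Fin n)
    (t : ℝ) (m : Fin n) : Prop where
  mQ : m ∈ d.Q
  mL : m ≤ iL
  t0 : 0 ≤ t
  below : ∀ j : Fin n, j < m → (pos j).2 < t
  above : t < (pos m).2
  memT : ∀ j, j ∈ TypeOf I d pos t ↔ j ∈ d.Q ∧ j < m ∧ I.Intersects pos j t
  wT : ∀ j ∈ TypeOf I d pos t, (I.r m).w ≤ (I.r j).w
  cases : ∀ j : Fin n, j < m → I.Intersects pos j t → j ∈ d.F ∨ j ∈ TypeOf I d pos t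
  hit : ∀ u, 0 ≤ u → u + (I.r m).w ≤ I.W → ∃ j : Fin n, j < m ∧ I.Intersects pos j t ∧
    (pos j).1 < u + (I.r m).w ∧ u < (pos j).1 + (I.r j).w

lemma iL_mem {iT iL : Fin n} (hiT : IsTopRect I d pos iT) (hiL : IsLeftRect I d pos iT iL) :
    iL ∈ d.Q := by
  rcases hiL with h | h
  · exact h.1
  · rw [h.2]; exact hiT.1

lemma lineData (hord : d.IsOrdered) (hBL : I.IsBL pos) {iL : Fin n} (hLQ : iL ∈ d.Q)
    {k : ℕ} {t : ℝ} (ht : InLk I d pos iL k t) : ∃ m, LineData I d pos iL t m := by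
  obtain ⟨hprop, ⟨m, hm1, hm2, hm3, hm4⟩, _⟩ := ht
  have hL := (hord.2.1 iL).1 hLQ
  have hm2' : (m : ℕ) ≤ (iL : ℕ) := hm2
  have hmQ : m ∈ d.Q := (hord.2.1 m).2 ⟨by omega, by omega⟩
  have hbelow : ∀ j : Fin n, j < m → (pos j).2 < t := by
    intro j hj
    have hb : (pos j).2 ≤ maxYBelow pos (m : ℕ) := by
      unfold maxYBelow
      exact le_ciSup (f := fun j : {j : Fin n // (j : ℕ) < (m : ℕ)} => (pos (j : Fin n)).2)
        (Set.finite_range _).bddAbove ⟨j, hj⟩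
    exact lt_of_le_of_ne (hb.trans hm3) (hprop j).1.symm
  have ht0 : 0 ≤ t := by
    have h0 : (0 : ℕ) < (m : ℕ) := by omega
    have h0n : 0 < n := by omega
    have := hbelow ⟨0, h0n⟩ h0
    have h2 := (hBL ⟨0, h0n⟩).1.1.2.2
    linarith
  have hmT : ∀ j, j ∈ TypeOf I d pos t ↔ j ∈ d.Q ∧ j < m ∧ I.Intersects pos j t := by
    intro j
    simp only [TypeOf, Finset.mem_filter, Finset.mem_univ, true_and]
    constructor
    · rintro ⟨h1, h2, h3⟩
      refine ⟨h1, ?_, h2⟩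
      by_contra hc
      have := h3 m (not_lt.1 hc)
      linarith
    · rintro ⟨h1, h2, h3⟩
      exact ⟨h1, h3, fun j' hj' => (hbelow j' (lt_of_le_of_lt hj' h2)).le⟩
  have hmQ' := (hord.2.1 m).1 hmQ
  refine ⟨m, hmQ, hm2, ht0, hbelow, hm4, hmT, ?_, ?_, ?_⟩
  · intro j hj
    obtain ⟨h1, h2, _⟩ := (hmT j).1 hj
    exact hord.2.2.2 j m ((hord.2.1 j).1 h1).1 (le_of_lt h2) hmQ'.2
  · intro j hj hint
    have hj' : (j : ℕ) < (m : ℕ) := hj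
    by_cases hjF : j ∈ d.F
    · exact Or.inl hjF
    · right
      refine (hmT j).2 ⟨(hord.2.1 j).2 ⟨?_, by omega⟩, hj, hint⟩
      by_contra hc
      exact hjF ((hord.1 j).2 (by omega))
  · intro u hu0 huW
    by_contra! hc
    have hfeas : I.FeasibleAt pos m (u, t) := by
      refine ⟨⟨hu0, huW, ht0⟩, ?_⟩
      intro j hj
      apply box_disj_of
      simp only
      have hb := hbelow j hj
      by_cases h1 : t < (pos j).2 + (I.r j).h
      · by_cases h2 : (pos j).1 < u + (I.r m).w
        · right; left
          exact hc j hj ⟨hb, h1⟩ h2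
        · left; exact not_lt.1 h2
      · right; right; right
        exact not_lt.1 h1
    have := (hBL m).2 _ hfeas
    simp only at this
    rcases this with h | h
    · linarith
    · linarith [h.1]

/-- A rectangle not touching the left boundary has a left supporter. -/
lemma exists_left_supporter (hBL : I.IsBL pos) {r : Fin n} (hr : 0 < (pos r).1) :
    ∃ q, I.IsLeftSupporter pos r q := by
  by_contra! hno
  let A : Finset (Fin n) := Finset.univ.filter fun j =>
    j < r ∧ (pos j).2 < (pos r).2 + (I.r r).h ∧ (pos r).2 < (pos j).2 + (I.r j).h ∧
      (pos j).1 + (I.r j).w ≤ (pos r).1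
  obtain ⟨v, hv0, hvr, hvA⟩ : ∃ v : ℝ, 0 ≤ v ∧ v < (pos r).1 ∧
      ∀ j ∈ A, (pos j).1 + (I.r j).w ≤ v := by
    rcases A.eq_empty_or_nonempty with hA | hA
    · exact ⟨0, le_rfl, hr, by simp [hA]⟩
    · obtain ⟨q, hq, hmax⟩ := A.exists_max_image (fun j => (pos j).1 + (I.r j).w) hA
      refine ⟨(pos q).1 + (I.r q).w, ?_, ?_, hmax⟩
      · have := (hBL q).1.1.1
        have := I.w_pos q
        linarith
      · simp only [A, Finset.mem_filter, Finset.mem_univ, true_and] at hq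
        obtain ⟨h1, h2, h3, h4⟩ := hq
        exact lt_of_le_of_ne h4 fun he => hno q ⟨h1, he, h2, h3⟩
  obtain ⟨⟨hx0, hxW, hy0⟩, _⟩ := (hBL r).1
  have hfeas : I.FeasibleAt pos r (v, (pos r).2) := by
    refine ⟨⟨hv0, by simp only; linarith, hy0⟩, ?_⟩
    intro j hj
    apply box_disj_of
    simp only
    rcases bl_sep hBL (ne_of_gt hj) with h | h | h | h
    · left; linarith
    · by_cases h1 : (pos j).2 < (pos r).2 + (I.r r).h
      · by_cases h2 : (pos r).2 < (pos j).2 + (I.r j).h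
        · right; left
          exact hvA j (by simp [A]; exact ⟨hj, h1, h2, h⟩)
        · right; right; right; exact not_lt.1 h2
      · right; right; left; exact not_lt.1 h1
    · right; right; left; exact h
    · right; right; right; exact h
  have := (hBL r).2 _ hfeas
  simp only at this
  rcases this with h | h
  · linarith
  · linarith [h.2]

/-- `LM(ℓ)` is supported from the left by a rectangle of `F`. -/
lemma lm_support (hord : d.IsOrdered) (hBL : I.IsBL pos) {iT iL : Fin n}
    (hiL : IsLeftRect I d pos iT iL) {t : ℝ} {m r : Fin n}
    (hD : LineData I d pos iL t m) (hr : IsLM I d pos t r) :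
    ∃ f ∈ d.F, preW I ((f : ℕ) + 1) = (pos r).1 ∧ (pos r).2 < (I.r f).h ∧
      ∀ g ∈ d.F, (pos r).2 < (I.r g).h → g ≤ f := by
  obtain ⟨hrT, hrmin⟩ := hr
  obtain ⟨hrQ, hrm, hrint⟩ := (hD.memT r).1 hrT
  obtain ⟨⟨hx0, hxW, hy0⟩, _⟩ := (hBL r).1
  have hrpos : 0 < (pos r).1 := by
    refine lt_of_le_of_ne hx0 fun h => ?_
    rcases hiL with h1 | h1
    · exact absurd (h1.2.2 r hrQ h.symm) (not_le.2 (lt_of_lt_of_le hrm hD.mL))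
    · exact h1.1 r hrQ h.symm
  obtain ⟨q, hqr, hqx, hq1, hq2⟩ := exists_left_supporter hBL hrpos
  have hqm := hqr.trans hrm
  have hwq := I.w_pos q
  have hwm := I.w_pos m
  have hrQ' := (hord.2.1 r).1 hrQ
  have hmQ' := (hord.2.1 m).1 hD.mQ
  have hqr' : (q : ℕ) < (r : ℕ) := hqr
  have hqm' : (q : ℕ) < (m : ℕ) := hqm
  have hqF : q ∈ d.F := by
    by_contra hqF
    have hqa : d.F.card ≤ (q : ℕ) := by
      by_contra hc
      exact hqF ((hord.1 q).2 (by omega))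
    have hqQ : q ∈ d.Q := (hord.2.1 q).2 ⟨hqa, by omega⟩
    have hqw : (I.r m).w ≤ (I.r q).w := hord.2.2.2 q m hqa (by omega) hmQ'.2
    have hwr := I.w_pos r
    by_cases hint : t < (pos q).2 + (I.r q).h
    · have := hrmin q ((hD.memT q).2 ⟨hqQ, hqm, hD.below q hqm, hint⟩)
      linarith
    · obtain ⟨j, hjm, hjint, hj1, hj2⟩ := hD.hit (pos q).1 (hBL q).1.1.1 (by linarith)
      rcases hD.cases j hjm hjint with hjF | hjT
      · have hj0 := (posF hord hBL hjF).2
        have hne : j ≠ q := fun h => hqF (h ▸ hjF)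
        have hqy := (hBL q).1.1.2.2
        have hhq := I.h_pos q
        obtain ⟨a1, a2⟩ := hjint
        rcases bl_sep hBL hne with h | h | h | h <;> linarith
      · have := hrmin j hjT
        linarith
  obtain ⟨e1, e2⟩ := posF hord hBL hqF
  have hs := preW_succ I q
  refine ⟨q, hqF, by linarith, by linarith, ?_⟩
  intro g hg hgh
  by_contra hc
  have hgq : (q : ℕ) < (g : ℕ) := not_le.1 hc
  have hga := (hord.1 g).1 hg
  let fnext : Fin n := ⟨(q : ℕ) + 1, by omega⟩
  have hfnF : fnext ∈ d.F := (hord.1 fnext).2 (by show (q : ℕ) + 1 < _; omega)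
  have hle : (I.r g).h ≤ (I.r fnext).h :=
    hord.2.2.1 fnext g (by show (q : ℕ) + 1 ≤ _; omega) hga
  obtain ⟨c1, c2⟩ := posF hord hBL hfnF
  have c3 : preW I (fnext : ℕ) = preW I ((q : ℕ) + 1) := rfl
  have hne : fnext ≠ r := by
    intro h
    have : (fnext : ℕ) < d.F.card := (hord.1 fnext).1 hfnF
    rw [h] at this
    omega
  have w1 := I.w_pos fnext
  have w2 := I.w_pos r
  have w3 := I.h_pos r
  rcases bl_sep hBL hne with h | h | h | h <;> linarith

/-- Total width of the rectangles of `F` meeting the line at height `t`. -/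
noncomputable def widthF (I : SPInstance n) (d : FQW I) (t : ℝ) : ℝ :=
  ∑ f ∈ d.F.filter (fun f => t < (I.r f).h), (I.r f).w

lemma preW_le_widthF (hord : d.IsOrdered) {t : ℝ} {f : Fin n} (hf : f ∈ d.F)
    (h : t < (I.r f).h) : preW I ((f : ℕ) + 1) ≤ widthF I d t := by
  unfold preW widthF
  apply Finset.sum_le_sum_of_subset_of_nonneg
  · intro a ha
    simp only [Finset.mem_filter, Finset.mem_univ, true_and] at ha ⊢
    have hfa := (hord.1 f).1 hf
    refine ⟨(hord.1 a).2 (by omega), ?_⟩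
    exact lt_of_lt_of_le h (hord.2.2.1 a f (by omega) hfa)
  · intro a _ _
    exact (I.w_pos a).le

lemma widthF_add_le_occ (hord : d.IsOrdered) (hBL : I.IsBL pos) {iL : Fin n} {t : ℝ}
    {m : Fin n} (hD : LineData I d pos iL t m) :
    widthF I d t + ∑ j ∈ TypeOf I d pos t, (I.r j).w ≤
      (volume (I.occupied pos t)).toReal := by
  unfold widthF
  have hmQ' := (hord.2.1 m).1 hD.mQ
  rw [← Finset.sum_union]
  · apply sum_le_occ hBL
    intro j hj
    rcases Finset.mem_union.1 hj with h | h
    · obtain ⟨h1, h2⟩ := Finset.mem_filter.1 h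
      have h3 := (hord.1 j).1 h1
      have hjm : j < m := by
        show (j : ℕ) < (m : ℕ)
        omega
      refine ⟨hD.below j hjm, ?_⟩
      rw [(posF hord hBL h1).2]
      linarith
    · exact ((hD.memT j).1 h).2.2
  · rw [Finset.disjoint_left]
    intro j h1 h2
    have h3 := (hord.1 j).1 (Finset.mem_filter.1 h1).1
    have h4 := ((hord.2.1 j).1 ((hD.memT j).1 h2).1).1
    omega

lemma F_right_le (hord : d.IsOrdered) (hBL : I.IsBL pos) {t : ℝ} {j : Fin n} (hj : j ∈ d.F)
    (hint : I.Intersects pos j t) : (pos j).1 + (I.r j).w ≤ widthF I d t := by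
  obtain ⟨e1, e2⟩ := posF hord hBL hj
  obtain ⟨_, h⟩ := hint
  rw [e1, ← preW_succ]
  exact preW_le_widthF hord hj (by linarith)

/-- The width of the part of a line not left of `X_F + w_m`. -/
lemma line_bound (hord : d.IsOrdered) (hBL : I.IsBL pos) {iL : Fin n} {t : ℝ}
    {m : Fin n} (hD : LineData I d pos iL t m) :
    I.W - (widthF I d t + (I.r m).w) ≤ ∑ j ∈ TypeOf I d pos t, (I.r j).w +
      (TypeOf I d pos t).card * (I.r m).w := by
  have hX : 0 ≤ widthF I d t := Finset.sum_nonneg fun a _ => (I.w_pos a).le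
  apply cover_bound (I.w_pos m).le (pos := pos)
  intro z hz1 hz2
  obtain ⟨j, hjm, hjint, hj1, hj2⟩ := hD.hit (z - (I.r m).w) (by linarith) (by linarith)
  rcases hD.cases j hjm hjint with h | h
  · have := F_right_le hord hBL h hjint
    linarith
  · exact ⟨j, h, by linarith, by linarith⟩

/-- The width of the part of a line right of its leftmost rectangle. -/
lemma lm_bound (hord : d.IsOrdered) (hBL : I.IsBL pos) {iT iL : Fin n}
    (hiL : IsLeftRect I d pos iT iL) {t : ℝ} {m r : Fin n}
    (hD : LineData I d pos iL t m) (hr : IsLM I d pos t r) :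
    I.W - (pos r).1 ≤ ∑ j ∈ TypeOf I d pos t, (I.r j).w +
      (TypeOf I d pos t).card * (I.r m).w := by
  obtain ⟨f, hfF, hfx, hfh, hfmax⟩ := lm_support hord hBL hiL hD hr
  have hx0 := (hBL r).1.1.1
  have hwr := I.w_pos r
  have hwm := I.w_pos m
  have hrint := ((hD.memT r).1 hr.1).2.2
  apply cover_bound (I.w_pos m).le (pos := pos)
  intro z hz1 hz2
  by_cases hz : z ≤ (pos r).1 + (I.r r).w + (I.r m).w
  · exact ⟨r, hr.1, hz1, hz⟩
  · obtain ⟨j, hjm, hjint, hj1, hj2⟩ := hD.hit (z - (I.r m).w) (by linarith) (by linarith)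
    rcases hD.cases j hjm hjint with h | h
    · obtain ⟨e1, e2⟩ := posF hord hBL h
      have hjf : j ≤ f := hfmax j h (by linarith [hjint.2, hrint.1])
      have hjf' : (j : ℕ) + 1 ≤ (f : ℕ) + 1 := Nat.succ_le_succ hjf
      have h3 := preW_mono I hjf'
      have h4 := preW_succ I j
      linarith
    · exact ⟨j, h, by linarith, by linarith⟩

/-- A line of `L^k` not intersecting `LM^k` lies below `LM^k`. -/
lemma below_lmk (hord : d.IsOrdered) (hBL : I.IsBL pos) {iT iL : Fin n}
    (hiL : IsLeftRect I d pos iT iL) {t ts : ℝ} {m ms r s : Fin n}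
    (hprop : I.ProperLine pos t)
    (hD : LineData I d pos iL t m) (hr : IsLM I d pos t r)
    (hDs : LineData I d pos iL ts ms) (hs : IsLM I d pos ts s)
    (hlex : (pos s).1 < (pos r).1 ∨ ((pos s).1 = (pos r).1 ∧ (pos r).2 ≤ (pos s).2))
    (hnot : ¬ I.Intersects pos s t) : t < (pos s).2 := by
  by_contra hc
  have h1 : (pos s).2 < t := lt_of_le_of_ne (not_lt.1 hc) (hprop s).1.symm
  have h2 : (pos s).2 + (I.r s).h < t := by
    refine lt_of_le_of_ne (not_lt.1 fun h => hnot ⟨h1, h⟩) (hprop s).2.symm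
  obtain ⟨f, hfF, hfx, hfh, hfmax⟩ := lm_support hord hBL hiL hDs hs
  obtain ⟨g, hgF, hgx, hgh, hgmax⟩ := lm_support hord hBL hiL hD hr
  obtain ⟨hsQ, hsms, hsint⟩ := (hDs.memT s).1 hs.1
  obtain ⟨hrQ, hrm, hrint⟩ := (hD.memT r).1 hr.1
  have hsm : s < m := by
    by_contra hcm
    have hms : m < ms := lt_of_le_of_lt (not_lt.1 hcm) hsms
    have := hDs.below m hms
    have := hD.above
    linarith [hsint.2]
  have hmQ' := (hord.2.1 m).1 hD.mQ
  have hw : (I.r m).w ≤ (I.r s).w :=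
    hord.2.2.2 s m ((hord.2.1 s).1 hsQ).1 (le_of_lt hsm) hmQ'.2
  obtain ⟨⟨hx0, hxW, hy0⟩, _⟩ := (hBL s).1
  have hws := I.w_pos s
  have hhs := I.h_pos s
  obtain ⟨j, hjm, hjint, hj1, hj2⟩ := hD.hit (pos s).1 hx0 (by linarith)
  have hxsr : (pos s).1 ≤ (pos r).1 := by
    rcases hlex with h | h
    · exact h.le
    · exact h.1.le
  rcases hD.cases j hjm hjint with h | h
  · obtain ⟨e1, e2⟩ := posF hord hBL h
    have hjf : j ≤ f := hfmax j h (by linarith [hjint.2])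
    have hjf' : (j : ℕ) + 1 ≤ (f : ℕ) + 1 := Nat.succ_le_succ hjf
    have h3 := preW_mono I hjf'
    have h4 := preW_succ I j
    linarith
  · have hrj := hr.2 j h
    have hne : r ≠ s := by
      rintro rfl
      exact hnot hrint
    have hwr := I.w_pos r
    have hyr : (pos s).2 < (pos r).2 := by
      have := hrint.2
      rcases bl_sep hBL hne with h | h | h | h <;> linarith
    have hgf : g ≤ f := hfmax g hgF (by linarith)
    have hgf' : (g : ℕ) + 1 ≤ (f : ℕ) + 1 := Nat.succ_le_succ hgf
    have h3 := preW_mono I hgf'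
    rcases hlex with h | h
    · linarith
    · linarith [h.2]

lemma type_sum_le (hord : d.IsOrdered) {iL : Fin n} {t ts : ℝ} {m ms : Fin n}
    (hD : LineData I d pos iL t m) (hDs : LineData I d pos iL ts ms) (hts : t < ts)
    (hcard : (TypeOf I d pos ts).card = (TypeOf I d pos t).card) :
    ∑ j ∈ TypeOf I d pos ts, (I.r j).w ≤ ∑ j ∈ TypeOf I d pos t, (I.r j).w := by
  set A := TypeOf I d pos ts with hA
  set B := TypeOf I d pos t with hB
  have hmQ' := (hord.2.1 m).1 hD.mQ
  have h1 : ∑ j ∈ A \ B, (I.r j).w ≤ (A \ B).card * (I.r m).w := by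
    rw [← nsmul_eq_mul]
    apply Finset.sum_le_card_nsmul
    intro j hj
    obtain ⟨hjA, hjB⟩ := Finset.mem_sdiff.1 hj
    obtain ⟨hjQ, hjms, hjint⟩ := (hDs.memT j).1 hjA
    have hmj : m ≤ j := by
      by_contra hc
      have hjm : j < m := not_le.1 hc
      exact hjB ((hD.memT j).2 ⟨hjQ, hjm, hD.below j hjm, by linarith [hjint.2]⟩)
    exact hord.2.2.2 m j hmQ'.1 hmj ((hord.2.1 j).1 hjQ).2
  have h2 : (B \ A).card * (I.r m).w ≤ ∑ j ∈ B \ A, (I.r j).w := by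
    rw [← nsmul_eq_mul]
    apply Finset.card_nsmul_le_sum
    intro j hj
    exact hD.wT j (Finset.mem_sdiff.1 hj).1
  have h3 : (A \ B).card = (B \ A).card := Finset.card_sdiff_comm hcard
  have h4 := Finset.sum_inter_add_sum_sdiff A B (fun j => (I.r j).w)
  have h5 := Finset.sum_inter_add_sum_sdiff B A (fun j => (I.r j).w)
  rw [Finset.inter_comm] at h5
  rw [h3] at h1
  linarith

lemma type_sum_ge {iL : Fin n} {t : ℝ} {m : Fin n} (hD : LineData I d pos iL t m) :
    (TypeOf I d pos t).card * (I.r m).w ≤ ∑ j ∈ TypeOf I d pos t, (I.r j).w := by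
  rw [← nsmul_eq_mul]
  exact Finset.card_nsmul_le_sum _ _ _ hD.wT

end Helpers

/-- **Corollary.** Every line of `L^k` that intersects `LM^k` is at least a
`k/(2k+1)` fraction occupied; every line of `L^k` that does not intersect
`LM^k` is at least half occupied. -/
theorem Lk_line_occupation {n : ℕ} (I : SPInstance n) (d : FQW I)
    (hord : d.IsOrdered) (pos : Fin n → ℝ × ℝ) (hBL : I.IsBL pos)
    (hQ : d.Q.Nonempty) (iT iL : Fin n) (hiT : IsTopRect I d pos iT)
    (hiL : IsLeftRect I d pos iT iL)
    (k : ℕ) (hk : 1 ≤ k) (iLMk : Fin n) (hLMk : IsLMk I d pos iL k iLMk) :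
    (∀ t : ℝ, InLk I d pos iL k t → I.Intersects pos iLMk t →
      (k : ℝ) / (2 * (k : ℝ) + 1) ≤ I.occFrac pos t) ∧
    (∀ t : ℝ, InLk I d pos iL k t → ¬ I.Intersects pos iLMk t →
      1 / 2 ≤ I.occFrac pos t) := by
  have hLQ := iL_mem hiT hiL
  constructor
  · intro t ht _
    obtain ⟨m, hD⟩ := lineData hord hBL hLQ ht
    have h1 := widthF_add_le_occ hord hBL hD
    have h2 := line_bound hord hBL hD
    have h3 := type_sum_ge hD
    rw [ht.2.2] at h2 h3
    have hX : 0 ≤ widthF I d t := Finset.sum_nonneg fun a _ => (I.w_pos a).le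
    have hk0 : (0 : ℝ) ≤ k := Nat.cast_nonneg k
    unfold SPInstance.occFrac
    rw [div_le_div_iff₀ (by positivity) I.W_pos]
    set S := ∑ j ∈ TypeOf I d pos t, (I.r j).w
    set V := (volume (I.occupied pos t)).toReal
    nlinarith [mul_le_mul_of_nonneg_left h2 hk0,
      mul_le_mul_of_nonneg_left h3 (by linarith : (0 : ℝ) ≤ k + 1),
      mul_le_mul_of_nonneg_left h1 (by linarith : (0 : ℝ) ≤ 2 * k + 1),
      mul_nonneg hk0 hX]
  · intro t ht hnot
    obtain ⟨⟨ts, hts, hs⟩, hmin⟩ := hLMk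
    obtain ⟨m, hD⟩ := lineData hord hBL hLQ ht
    obtain ⟨ms, hDs⟩ := lineData hord hBL hLQ hts
    have hne : (TypeOf I d pos t).Nonempty := by
      rw [← Finset.card_pos, ht.2.2]
      omega
    obtain ⟨r, hrT, hrmin⟩ := Finset.exists_min_image _ (fun j => (pos j).1) hne
    have hr : IsLM I d pos t r := ⟨hrT, hrmin⟩
    have hlt := below_lmk hord hBL hiL ht.1 hD hr hDs hs (hmin r ⟨t, ht, hr⟩) hnot
    obtain ⟨f, hfF, hfx, hfh, _⟩ := lm_support hord hBL hiL hDs hs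
    have hsint := ((hDs.memT iLMk).1 hs.1).2.2
    have h1 := widthF_add_le_occ hord hBL hD
    have h2 := lm_bound hord hBL hiL hDs hs
    have h3 := type_sum_ge hDs
    have h4 := type_sum_le hord hD hDs (hlt.trans hsint.1) (by rw [ht.2.2, hts.2.2])
    have h5 := preW_le_widthF hord hfF (hlt.trans hfh)
    have hx0 := (hBL iLMk).1.1.1
    unfold SPInstance.occFrac
    rw [div_le_div_iff₀ (by norm_num) I.W_pos]
    linarith
end

section
/- Let (W, r_1, …, r_n) be a Strip Packing instance in which every rectangle is a square (w_r = h_r for all r), with the rectangles listed in the FQW-ordering, and let h_BL be the height of the Bottom-Left packing for this ordering. Then h_BL ≤ 2 · h_OPT. -/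
open scoped Classical
open MeasureTheory

/-! ### Elementary facts on boxes and lines -/

lemma openBox_sep {R S : Rect} {p q : ℝ × ℝ} (hRw : 0 < R.w) (hRh : 0 < R.h)
    (hSw : 0 < S.w) (hSh : 0 < S.h) :
    Disjoint (openBox R p) (openBox S q) ↔
      (p.1 + R.w ≤ q.1 ∨ q.1 + S.w ≤ p.1 ∨ p.2 + R.h ≤ q.2 ∨ q.2 + S.h ≤ p.2) := by
  constructor
  · intro hd
    by_contra hc
    push Not at hc
    obtain ⟨h1, h2, h3, h4⟩ := hc
    obtain ⟨u, hu1, hu2⟩ := exists_between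
      (show max p.1 q.1 < min (p.1 + R.w) (q.1 + S.w) by
        simp only [max_lt_iff, lt_min_iff]; refine ⟨⟨?_, ?_⟩, ?_, ?_⟩ <;> linarith)
    obtain ⟨v, hv1, hv2⟩ := exists_between
      (show max p.2 q.2 < min (p.2 + R.h) (q.2 + S.h) by
        simp only [max_lt_iff, lt_min_iff]; refine ⟨⟨?_, ?_⟩, ?_, ?_⟩ <;> linarith)
    simp only [max_lt_iff, lt_min_iff] at hu1 hu2 hv1 hv2
    refine Set.disjoint_left.1 hd (show (u, v) ∈ openBox R p from ?_) ?_
    · exact ⟨⟨hu1.1, hu2.1⟩, ⟨hv1.1, hv2.1⟩⟩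
    · exact ⟨⟨hu1.2, hu2.2⟩, ⟨hv1.2, hv2.2⟩⟩
  · intro h
    refine Set.disjoint_left.2 ?_
    rintro ⟨u, v⟩ ⟨⟨a1, a2⟩, ⟨a3, a4⟩⟩ ⟨⟨b1, b2⟩, ⟨b3, b4⟩⟩
    simp only at a1 a2 a3 a4 b1 b2 b3 b4
    rcases h with h | h | h | h <;> linarith

/-- The weight carried by the horizontal line at height `t`. -/
noncomputable def lineW {ι : Type*} (s : Finset ι) (y h a : ι → ℝ) (t : ℝ) : ℝ :=
  ∑ i ∈ s, (Set.Ico (y i) (y i + h i)).indicator (fun _ => a i) t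

lemma lineW_integrable {ι : Type*} (s : Finset ι) (y h a : ι → ℝ) :
    Integrable (lineW s y h a) := by
  unfold lineW
  apply integrable_finsetSum
  intro i _
  rw [integrable_indicator_iff measurableSet_Ico]
  exact integrableOn_const (by simp)

lemma lineW_integral {ι : Type*} (s : Finset ι) (y h a : ι → ℝ) (hh : ∀ i ∈ s, 0 ≤ h i) :
    ∫ t, lineW s y h a t = ∑ i ∈ s, h i * a i := by
  unfold lineW
  rw [integral_finsetSum]
  · apply Finset.sum_congr rfl
    intro i hi
    rw [integral_indicator measurableSet_Ico]
    simp [hh i hi]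
  · intro i _
    rw [integrable_indicator_iff measurableSet_Ico]
    exact integrableOn_const (by simp)

lemma lineW_eq {ι : Type*} (s : Finset ι) (y h a : ι → ℝ) (t : ℝ) :
    lineW s y h a t = ∑ i ∈ s with (y i ≤ t ∧ t < y i + h i), a i := by
  unfold lineW
  rw [Finset.sum_filter]
  apply Finset.sum_congr rfl
  intro i _
  simp [Set.indicator_apply, Set.mem_Ico]

lemma sum_le_of_sep {ι : Type*} (s : Finset ι) (x w : ι → ℝ) (W : ℝ) (hW : 0 ≤ W)
    (hw : ∀ i ∈ s, 0 < w i)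
    (hx0 : ∀ i ∈ s, 0 ≤ x i) (hxW : ∀ i ∈ s, x i + w i ≤ W)
    (hs : ∀ i ∈ s, ∀ j ∈ s, i ≠ j → x i + w i ≤ x j ∨ x j + w j ≤ x i) :
    ∑ i ∈ s, w i ≤ W := by
  have h1 : volume (⋃ i ∈ s, Set.Ico (x i) (x i + w i)) =
      ∑ i ∈ s, volume (Set.Ico (x i) (x i + w i)) := by
    apply measure_biUnion_finset
    · intro i hi j hj hij
      refine Set.disjoint_left.2 ?_
      rintro u ⟨h1, h2⟩ ⟨h3, h4⟩
      rcases hs i hi j hj hij with h | h <;> linarith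
    · intro i _; exact measurableSet_Ico
  have h2 : volume (⋃ i ∈ s, Set.Ico (x i) (x i + w i)) ≤ volume (Set.Icc 0 W) := by
    apply measure_mono
    intro u hu
    simp only [Set.mem_iUnion, Set.mem_Ico] at hu
    obtain ⟨i, hi, h3, h4⟩ := hu
    have := hx0 i hi
    have := hxW i hi
    constructor <;> linarith
  rw [h1] at h2
  simp only [Real.volume_Ico, Real.volume_Icc, add_sub_cancel_left, sub_zero] at h2
  rw [← ENNReal.ofReal_sum_of_nonneg (fun i hi => (hw i hi).le)] at h2
  exact (ENNReal.ofReal_le_ofReal_iff hW).1 h2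

lemma le_two_sum_of_cover {ι : Type*} (s : Finset ι) (x w : ι → ℝ) (W : ℝ)
    (hw : ∀ i ∈ s, 0 < w i)
    (hc : ∀ u, 0 ≤ u → u ≤ W → ∃ i ∈ s, x i ≤ u ∧ u ≤ x i + 2 * w i) :
    W ≤ ∑ i ∈ s, 2 * w i := by
  have h1 : volume (Set.Icc 0 W) ≤ ∑ i ∈ s, volume (Set.Icc (x i) (x i + 2 * w i)) := by
    refine le_trans (measure_mono ?_) (measure_biUnion_finset_le s _)
    intro u hu
    obtain ⟨i, hi, h⟩ := hc u hu.1 hu.2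
    simp only [Set.mem_iUnion]
    exact ⟨i, hi, h⟩
  simp only [Real.volume_Icc, add_sub_cancel_left, sub_zero] at h1
  rw [← ENNReal.ofReal_sum_of_nonneg (fun i hi => by have := hw i hi; linarith)] at h1
  refine (ENNReal.ofReal_le_ofReal_iff (Finset.sum_nonneg fun i hi => ?_)).1 h1
  have := hw i hi; linarith

/-- Separation of two squares. -/
def SqSep (x y w x₂ y₂ w₂ : ℝ) : Prop :=
  x + w ≤ x₂ ∨ x₂ + w₂ ≤ x ∨ y + w ≤ y₂ ∨ y₂ + w₂ ≤ y

/-- The squares meeting a line of a packing have total width at most `W`. -/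
lemma line_le {ι : Type*} (s : Finset ι) (x y w : ι → ℝ) (W : ℝ) (hW : 0 ≤ W)
    (hw : ∀ i, 0 < w i)
    (hx0 : ∀ i, 0 ≤ x i) (hxW : ∀ i, x i + w i ≤ W)
    (hd : ∀ i j, i ≠ j → SqSep (x i) (y i) (w i) (x j) (y j) (w j)) (t : ℝ)
    (hs : ∀ i ∈ s, y i ≤ t ∧ t < y i + w i) :
    ∑ i ∈ s, w i ≤ W := by
  refine sum_le_of_sep s x w W hW (fun i _ => hw i) (fun i _ => hx0 i) (fun i _ => hxW i) ?_
  intro i hi j hj hij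
  obtain ⟨h1, h2⟩ := hs i hi
  obtain ⟨h3, h4⟩ := hs j hj
  rcases hd i j hij with h | h | h | h
  · exact Or.inl h
  · exact Or.inr h
  · linarith
  · linarith

/-- Area bound for a packing of squares of height at most `H`. -/
lemma area_le {ι : Type*} [Fintype ι] (x y w : ι → ℝ) (W H : ℝ) (hW : 0 ≤ W) (hH : 0 ≤ H)
    (hw : ∀ i, 0 < w i)
    (hx0 : ∀ i, 0 ≤ x i) (hxW : ∀ i, x i + w i ≤ W) (hy : ∀ i, 0 ≤ y i)
    (hyH : ∀ i, y i + w i ≤ H)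
    (hd : ∀ i j, i ≠ j → SqSep (x i) (y i) (w i) (x j) (y j) (w j)) :
    ∑ i, w i * w i ≤ W * H := by
  rw [← lineW_integral Finset.univ y w w (fun i _ => (hw i).le)]
  have h2 : ∫ t, (lineW {()} (fun _ => 0) (fun _ => H) (fun _ => W)) t = W * H := by
    rw [lineW_integral _ _ _ _ (fun _ _ => hH)]; simp [mul_comm]
  rw [← h2]
  apply integral_mono (lineW_integrable _ _ _ _) (lineW_integrable _ _ _ _)
  intro t
  simp only
  rw [lineW_eq]
  by_cases ht : 0 ≤ t ∧ t < H
  · have : lineW {()} (fun _ => 0) (fun _ => H) (fun _ => W) t = W := by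
      simp [lineW, ht]
    rw [this]
    apply line_le _ x y w W hW hw hx0 hxW hd t
    intro i hi
    simpa using hi
  · rw [Finset.sum_eq_zero]
    · unfold lineW
      exact Finset.sum_nonneg fun _ _ => Set.indicator_nonneg (fun _ _ => hW) _
    · intro i hi
      exfalso
      simp only [Finset.mem_filter, Finset.mem_univ, true_and] at hi
      have := hy i
      have := hyH i
      exact ht ⟨by linarith, by linarith⟩

/-- Lower area bound from three layers. -/
lemma area_ge {ι : Type*} (s : Finset ι) (y w : ι → ℝ) (W a b : ℝ) (ha : 0 ≤ a) (hab : a ≤ b)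
    (hw : ∀ i, 0 < w i)
    (h1 : ∀ t, 0 ≤ t → t < a → W - a ≤ lineW s y w w t)
    (h2 : ∀ t, a ≤ t → t < b → W / 2 ≤ lineW s y w w t)
    (h3 : ∀ t, b ≤ t → t < b + a → a ≤ lineW s y w w t) :
    (b + a) * (W / 2) ≤ ∑ i ∈ s, w i * w i := by
  rw [← lineW_integral s y w w (fun i _ => (hw i).le)]
  have e : ∫ t, (lineW Finset.univ ![0, a, b] ![a, b - a, a] ![W - a, W / 2, a]) t
      = (b + a) * (W / 2) := by
    rw [lineW_integral]
    · simp [Fin.sum_univ_three]; ring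
    · intro i _; fin_cases i <;> simp <;> linarith
  rw [← e]
  apply integral_mono (lineW_integrable _ _ _ _) (lineW_integrable _ _ _ _)
  intro t
  have hnn : 0 ≤ lineW s y w w t :=
    Finset.sum_nonneg fun i _ => Set.indicator_nonneg (fun _ _ => (hw i).le) _
  simp only
  rw [lineW, Fin.sum_univ_three]
  simp only [Matrix.cons_val, Set.indicator_apply, Set.mem_Ico, zero_add,
    add_sub_cancel]
  have g1 := h1 t
  have g2 := h2 t
  have g3 := h3 t
  rcases lt_or_ge t 0 with c0 | c0
  · rw [if_neg (by rintro ⟨_, _⟩; linarith), if_neg (by rintro ⟨_, _⟩; linarith),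
      if_neg (by rintro ⟨_, _⟩; linarith)]
    linarith
  rcases lt_or_ge t a with c1 | c1
  · rw [if_pos ⟨c0, c1⟩, if_neg (by rintro ⟨_, _⟩; linarith),
      if_neg (by rintro ⟨_, _⟩; linarith)]
    have := g1 c0 c1
    linarith
  rcases lt_or_ge t b with c2 | c2
  · rw [if_neg (by rintro ⟨_, _⟩; linarith), if_pos ⟨c1, c2⟩,
      if_neg (by rintro ⟨_, _⟩; linarith)]
    have := g2 c1 c2
    linarith
  rcases lt_or_ge t (b + a) with c3 | c3
  · rw [if_neg (by rintro ⟨_, _⟩; linarith), if_neg (by rintro ⟨_, _⟩; linarith),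
      if_pos ⟨c2, c3⟩]
    have := g3 c2 c3
    linarith
  · rw [if_neg (by rintro ⟨_, _⟩; linarith), if_neg (by rintro ⟨_, _⟩; linarith),
      if_neg (by rintro ⟨_, _⟩; linarith)]
    linarith

/-! ### The greedy set -/

lemma greedy_fold {n : ℕ} (w : Fin n → ℝ) (W : ℝ) (hW : 0 ≤ W) (σ : Equiv.Perm (Fin n))
    (l : List (Fin n)) (hl : l.Pairwise fun k k' => w (σ k') ≤ w (σ k))
    (F : Finset (Fin n))
    (hF : F = l.foldl (fun F k => if w (σ k) + ∑ f ∈ F, w f ≤ W then insert (σ k) F else F) ∅)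
    (hw : ∀ i, 0 < w i) :
    (∀ f ∈ F, ∃ k ∈ l, σ k = f) ∧ ∑ f ∈ F, w f ≤ W ∧
      ∀ k ∈ l, σ k ∉ F → W < w (σ k) + ∑ f ∈ F with w (σ k) ≤ w f, w f := by
  induction l using List.reverseRecOn generalizing F with
  | nil => subst hF; simpa using hW
  | append_singleton l a ih =>
    rw [List.pairwise_append] at hl
    obtain ⟨hl1, _, hl2⟩ := hl
    rw [List.foldl_append] at hF
    obtain ⟨i1, i2, i3⟩ := ih hl1 _ rfl
    set F₀ := l.foldl
      (fun F k => if w (σ k) + ∑ f ∈ F, w f ≤ W then insert (σ k) F else F) ∅ with hF₀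
    simp only [List.foldl_cons, List.foldl_nil] at hF
    by_cases hc : w (σ a) + ∑ f ∈ F₀, w f ≤ W
    · rw [if_pos hc] at hF
      subst hF
      refine ⟨?_, ?_, ?_⟩
      · intro f hf
        rcases Finset.mem_insert.1 hf with rfl | hf
        · exact ⟨a, by simp, rfl⟩
        · obtain ⟨k, hk, e⟩ := i1 f hf
          exact ⟨k, by simp [hk], e⟩
      · by_cases hm : σ a ∈ F₀
        · rw [Finset.insert_eq_of_mem hm]; exact i2
        · rw [Finset.sum_insert hm]; exact hc
      · intro k hk hkn
        rw [Finset.mem_insert, not_or] at hkn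
        have hkl : k ∈ l := by
          rcases List.mem_append.1 hk with h | h
          · exact h
          · simp at h; subst h; exact absurd rfl hkn.1
        refine lt_of_lt_of_le (i3 k hkl hkn.2) ?_
        gcongr
        · exact fun i _ _ => (hw i).le
        · exact Finset.subset_insert _ _
    · rw [if_neg hc] at hF
      subst hF
      refine ⟨?_, i2, ?_⟩
      · intro f hf
        obtain ⟨k, hk, e⟩ := i1 f hf
        exact ⟨k, by simp [hk], e⟩
      · intro k hk hkn
        rcases List.mem_append.1 hk with h | h
        · exact i3 k h hkn
        · simp at h
          subst h
          rw [Finset.filter_true_of_mem]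
          · exact not_le.1 hc
          · intro f hf
            obtain ⟨k', hk', rfl⟩ := i1 f hf
            exact hl2 k' hk' k (by simp)

/-! ### The core argument, in coordinates -/

/-- All data needed about a Bottom-Left packing of squares in FQW-ordering. -/
structure Core {n : ℕ} (W : ℝ) (w x y : Fin n → ℝ) (F : Finset (Fin n)) (a b : ℕ) : Prop where
  W_pos : 0 < W
  w_pos : ∀ i, 0 < w i
  w_le : ∀ i, w i ≤ W
  x0 : ∀ i, 0 ≤ x i
  xW : ∀ i, x i + w i ≤ W
  y0 : ∀ i, 0 ≤ y i
  sep : ∀ i j, i ≠ j → SqSep (x i) (y i) (w i) (x j) (y j) (w j)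
  bl : ∀ i p q, 0 ≤ p → p + w i ≤ W → 0 ≤ q →
    (∀ j, j < i → SqSep p q (w i) (x j) (y j) (w j)) → y i < q ∨ (y i = q ∧ x i ≤ p)
  memF : ∀ i, i ∈ F ↔ (i : ℕ) < a
  sumF : ∑ f ∈ F, w f ≤ W
  greedy : ∀ i, i ∉ F → W < w i + ∑ f ∈ F with w i ≤ w f, w f
  sortF : ∀ i j : Fin n, i ≤ j → j ∈ F → w j ≤ w i
  sortQ : ∀ i j : Fin n, a ≤ (i : ℕ) → i ≤ j → (j : ℕ) < b → w j ≤ w i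
  smallQ : ∀ i : Fin n, i ∉ F → (i : ℕ) < b → w i ≤ W / 2
  bigW : ∀ i : Fin n, i ∉ F → ¬ (i : ℕ) < b → W / 2 < w i

namespace Core

variable {n : ℕ} {W : ℝ} {w x y : Fin n → ℝ} {F : Finset (Fin n)} {a b : ℕ}

lemma F_pos (C : Core W w x y F a b) :
    ∀ i, i ∈ F → y i = 0 ∧ x i ≤ ∑ j ∈ Finset.Iio i, w j := by
  intro i
  induction i using WellFoundedLT.induction with
  | ind i ih =>
    intro hi
    have hia := (C.memF i).1 hi
    have hsub : ∀ j, j ≤ i → j ∈ F := fun j hj =>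
      (C.memF j).2 (lt_of_le_of_lt (by exact_mod_cast hj) hia)
    have hb := C.bl i (∑ j ∈ Finset.Iio i, w j) 0
      (Finset.sum_nonneg fun j _ => (C.w_pos j).le) ?_ le_rfl ?_
    · rcases hb with h | h
      · exact absurd h (not_lt.2 (C.y0 i))
      · exact h
    · have : ∑ j ∈ Finset.Iio i, w j + w i = ∑ j ∈ Finset.Iic i, w j := by
        rw [← Finset.Iio_insert, Finset.sum_insert (by simp)]; ring
      rw [this]
      refine le_trans (Finset.sum_le_sum_of_subset_of_nonneg ?_ ?_) C.sumF
      · intro j hj; exact hsub j (by simpa using hj)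
      · intro j _ _; exact (C.w_pos j).le
    · intro j hj
      right; left
      have h1 := (ih j hj (hsub j hj.le)).2
      have h2 : ∑ k ∈ Finset.Iio j, w k + w j = ∑ k ∈ Finset.Iic j, w k := by
        rw [← Finset.Iio_insert, Finset.sum_insert (by simp)]; ring
      have h3 : ∑ k ∈ Finset.Iic j, w k ≤ ∑ k ∈ Finset.Iio i, w k := by
        apply Finset.sum_le_sum_of_subset_of_nonneg
        · intro k hk
          simp only [Finset.mem_Iic, Finset.mem_Iio] at hk ⊢
          exact lt_of_le_of_lt hk hj
        · intro j _ _; exact (C.w_pos j).le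
      linarith

lemma not_F_y (C : Core W w x y F a b) (i : Fin n) (hi : i ∉ F) : w i ≤ y i := by
  by_contra hc
  push Not at hc
  have hni : i ∉ F.filter (fun f => w i ≤ w f) := fun h => hi (Finset.mem_filter.1 h).1
  have := line_le (insert i (F.filter fun f => w i ≤ w f)) x y w W C.W_pos.le C.w_pos C.x0 C.xW
    C.sep (y i) ?_
  · rw [Finset.sum_insert hni] at this
    have := C.greedy i hi
    linarith
  · intro j hj
    rcases Finset.mem_insert.1 hj with rfl | hj
    · have := C.w_pos j
      constructor <;> linarith
    · obtain ⟨h1, h2⟩ := Finset.mem_filter.1 hj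
      have h3 := (C.F_pos j h1).1
      have := C.y0 i
      constructor <;> linarith

/-- On lines below the height of `i ∉ F`, the set `F` is dense. -/
lemma low_line (C : Core W w x y F a b) (i T : Fin n) (hi : i ∉ F) (hT : T ∉ F) (t : ℝ)
    (h0 : 0 ≤ t) (ht : t < w i) :
    W - w i ≤ lineW (Finset.Iic T) y w w t := by
  have h1 := C.greedy i hi
  have h2 : ∑ f ∈ F with w i ≤ w f, w f ≤ lineW (Finset.Iic T) y w w t := by
    rw [lineW_eq]
    apply Finset.sum_le_sum_of_subset_of_nonneg
    · intro f hf
      obtain ⟨g1, g2⟩ := Finset.mem_filter.1 hf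
      have g3 := (C.F_pos f g1).1
      simp only [Finset.mem_filter, Finset.mem_Iic]
      refine ⟨?_, by linarith, by linarith⟩
      have e1 := (C.memF f).1 g1
      have e2 := mt (C.memF T).2 hT
      rw [Fin.le_def]; omega
    · intro j _ _; exact (C.w_pos j).le
  linarith

/-- Middle lines are at least half occupied. -/
lemma mid_line (C : Core W w x y F a b) (T : Fin n) (hT : T ∉ F) (hTb : (T : ℕ) < b) (t : ℝ)
    (h0 : 0 ≤ t) (ht : t < y T) :
    W / 2 ≤ lineW (Finset.Iic T) y w w t := by
  have hex : ∃ m : Fin n, t < y m ∧ ∀ j < m, y j ≤ t := by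
    obtain ⟨m, hm, hmin⟩ := WellFounded.has_min (wellFounded_lt (α := Fin n))
      {m | t < y m} ⟨T, ht⟩
    exact ⟨m, hm, fun j hj => not_lt.1 fun h => hmin j h hj⟩
  obtain ⟨m, hm, hmin⟩ := hex
  have hmT : m ≤ T := by
    by_contra hc
    have := hmin T (not_le.1 hc)
    linarith
  have hmF : m ∉ F := fun h => by have := (C.F_pos m h).1; linarith
  have hmb : (m : ℕ) < b := lt_of_le_of_lt (by exact_mod_cast hmT) hTb
  have hms := C.smallQ m hmF hmb
  rcases lt_or_ge t (w m) with hc | hc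
  · have := C.low_line m T hmF hT t h0 hc
    linarith
  have hgeF : ∀ j ∈ F, t < w j → w m ≤ w j := fun j _ h => by linarith
  have hgeQ : ∀ j, j ∉ F → j < m → w m ≤ w j := fun j hj hjm =>
    C.sortQ j m (not_lt.1 (mt (C.memF j).2 hj)) hjm.le hmb
  set A : Finset (Fin n) := (Finset.Iio m).filter fun i => t < y i + w i with hA
  have hmemA : ∀ i, i ∈ A ↔ i < m ∧ t < y i + w i := by intro i; simp [hA]
  have hwA : ∀ i ∈ A, w m ≤ w i := by
    intro i hi
    obtain ⟨h1, h2⟩ := (hmemA i).1 hi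
    by_cases hF : i ∈ F
    · have := (C.F_pos i hF).1
      exact hgeF i hF (by linarith)
    · exact hgeQ i hF h1
  -- no gap of width `w m`
  have hgap : ∀ p, 0 ≤ p → p + w m ≤ W →
      ∃ j ∈ A, x j < p + w m ∧ p < x j + w j := by
    intro p hp hpW
    by_contra hcon
    push Not at hcon
    have := C.bl m p t hp hpW h0 ?_
    · rcases this with h | h
      · linarith
      · linarith [h.1]
    · intro j hj
      by_cases hjA : j ∈ A
      · have := hcon j hjA
        by_cases h : x j < p + w m
        · exact Or.inr (Or.inl (this h))
        · exact Or.inl (not_lt.1 h)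
      · right; right; right
        exact not_lt.1 fun h => hjA ((hmemA j).2 ⟨hj, h⟩)
  have hsepA : ∀ i ∈ A, ∀ j ∈ A, i ≠ j → x i + w i ≤ x j ∨ x j + w j ≤ x i := by
    intro i hi j hj hij
    obtain ⟨h1, h2⟩ := (hmemA i).1 hi
    obtain ⟨h3, h4⟩ := (hmemA j).1 hj
    have := hmin i h1
    have := hmin j h3
    rcases C.sep i j hij with h | h | h | h
    · exact Or.inl h
    · exact Or.inr h
    · linarith
    · linarith
  have hAne : A.Nonempty := by
    obtain ⟨j, hj, _⟩ := hgap 0 le_rfl (by linarith [C.w_le m])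
    exact ⟨j, hj⟩
  -- the leftmost element touches the left boundary
  have hleft : ∃ l ∈ A, x l = 0 := by
    obtain ⟨l, hl, hlmin⟩ := Finset.exists_min_image A x hAne
    refine ⟨l, hl, ?_⟩
    by_contra hx
    have hxp : 0 < x l := lt_of_le_of_ne (C.x0 l) (Ne.symm hx)
    obtain ⟨hlm, hlt⟩ := (hmemA l).1 hl
    -- the position `(0, y l)` was blocked by an earlier square
    have hblock : ∃ s, s < l ∧ ¬ SqSep 0 (y l) (w l) (x s) (y s) (w s) := by
      by_contra hcon
      push Not at hcon
      have := C.bl l 0 (y l) le_rfl (by linarith [C.w_le l]) (C.y0 l) hcon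
      rcases this with h | h
      · linarith
      · linarith [h.2]
    obtain ⟨s, hsl, hs⟩ := hblock
    unfold SqSep at hs
    push Not at hs
    obtain ⟨s1, s2, s3, s4⟩ := hs
    have hsx : x s + w s ≤ x l := by
      rcases C.sep l s (ne_of_gt hsl) with h | h | h | h
      · linarith
      · exact h
      · linarith
      · linarith
    have hws : w m ≤ w s := by
      by_cases hsF : s ∈ F
      · have ys := (C.F_pos s hsF).1
        by_cases hlF : l ∈ F
        · have := C.sortF s l hsl.le hlF
          linarith [hwA l hl]
        · have := C.not_F_y l hlF
          linarith [hwA l hl]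
      · exact hgeQ s hsF (hsl.trans hlm)
    obtain ⟨j, hj, hj1, hj2⟩ := hgap 0 le_rfl (by linarith [C.w_le m])
    have := hlmin j hj
    have := C.x0 s
    linarith
  have hcov : W ≤ ∑ i ∈ A, 2 * w i := by
    apply le_two_sum_of_cover A x w W (fun i _ => C.w_pos i)
    intro u hu0 huW
    obtain ⟨l, hl, hl0⟩ := hleft
    obtain ⟨i, hi, himax⟩ := Finset.exists_max_image (A.filter fun i => x i ≤ u) x
      ⟨l, by simp [hl, hl0, hu0]⟩
    obtain ⟨hiA, hiu⟩ := Finset.mem_filter.1 hi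
    refine ⟨i, hiA, hiu, ?_⟩
    by_contra hc2
    push Not at hc2
    have hwi := hwA i hiA
    have := C.x0 i
    have := C.w_pos i
    obtain ⟨j, hj, hj1, hj2⟩ := hgap (x i + w i) (by linarith) (by linarith)
    have hju : x j ≤ u := by linarith
    have hji := himax j (Finset.mem_filter.2 ⟨hj, hju⟩)
    have hne : i ≠ j := by rintro rfl; linarith
    have := C.w_pos j
    rcases hsepA i hiA j hj hne with h | h <;> linarith
  rw [← Finset.mul_sum] at hcov
  have hle : ∑ i ∈ A, w i ≤ lineW (Finset.Iic T) y w w t := by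
    rw [lineW_eq]
    apply Finset.sum_le_sum_of_subset_of_nonneg
    · intro i hi
      obtain ⟨h1, h2⟩ := (hmemA i).1 hi
      simp only [Finset.mem_filter, Finset.mem_Iic]
      exact ⟨h1.le.trans hmT, hmin i h1, h2⟩
    · intro j _ _; exact (C.w_pos j).le
  linarith

lemma Q_area (C : Core W w x y F a b) (T : Fin n) (hT : T ∉ F) (hTb : (T : ℕ) < b) :
    (y T + w T) * (W / 2) ≤ ∑ i ∈ Finset.Iic T, w i * w i := by
  apply area_ge _ y w W (w T) (y T) (C.w_pos T).le (C.not_F_y T hT) C.w_pos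
  · intro t h0 h1
    exact C.low_line T T hT hT t h0 h1
  · intro t h0 h1
    exact C.mid_line T hT hTb t (by linarith [C.w_pos T]) h1
  · intro t h0 h1
    rw [lineW_eq]
    apply Finset.single_le_sum (f := w) (fun i _ => (C.w_pos i).le)
    simp [h0, h1]

lemma all_area (C : Core W w x y F a b) :
    ∀ i, i ∉ F → (y i + w i) * (W / 2) ≤ ∑ k ∈ Finset.Iic i, w k * w k := by
  intro i
  induction i using WellFoundedLT.induction with
  | ind i ih =>
    intro hi
    by_cases hib : (i : ℕ) < b
    · exact C.Q_area i hi hib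
    have hbig := C.bigW i hi hib
    have hWp := C.W_pos
    set S := ∑ k ∈ Finset.Iio i, w k * w k with hS
    have hsplit : ∑ k ∈ Finset.Iic i, w k * w k = w i * w i + S := by
      rw [← Finset.Iio_insert, Finset.sum_insert (by simp)]
    have hSnn : 0 ≤ S := Finset.sum_nonneg fun k _ => (mul_pos (C.w_pos k) (C.w_pos k)).le
    have hsub : ∀ j, j < i → ∑ k ∈ Finset.Iic j, w k * w k ≤ S := by
      intro j hj
      apply Finset.sum_le_sum_of_subset_of_nonneg
      · intro k hk
        simp only [Finset.mem_Iic, Finset.mem_Iio] at hk ⊢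
        exact lt_of_le_of_lt hk hj
      · intro k _ _; exact (mul_pos (C.w_pos k) (C.w_pos k)).le
    have hone : ∀ j, j < i → w j * w j ≤ S := by
      intro j hj
      exact Finset.single_le_sum (f := fun k => w k * w k)
        (fun k _ => (mul_pos (C.w_pos k) (C.w_pos k)).le) (Finset.mem_Iio.2 hj)
    have htop : ∀ j, j < i → (y j + w j) * (W / 2) ≤ S := by
      intro j hj
      by_cases hjF : j ∈ F
      · rw [(C.F_pos j hjF).1, zero_add]
        rcases lt_or_ge (W / 2) (w j) with h | h
        · have := hone j hj
          nlinarith [C.w_pos j]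
        · have hg := C.greedy i hi
          have hne : (F.filter fun f => w i ≤ w f).Nonempty := by
            rw [Finset.nonempty_iff_ne_empty]
            intro he
            rw [he, Finset.sum_empty] at hg
            linarith [C.w_le i]
          obtain ⟨f, hf⟩ := hne
          obtain ⟨hf1, hf2⟩ := Finset.mem_filter.1 hf
          have hfi : f < i := by
            have e1 := (C.memF f).1 hf1
            have e2 := mt (C.memF i).2 hi
            rw [Fin.lt_def]; omega
          have := hone f hfi
          nlinarith [C.w_pos j]
      · exact (ih j hj hjF).trans (hsub j hj)
    have hy : y i ≤ S / (W / 2) := by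
      have := C.bl i 0 (S / (W / 2)) le_rfl (by linarith [C.w_le i]) (by positivity) ?_
      · rcases this with h | h
        · exact h.le
        · exact h.1.le
      · intro j hj
        right; right; right
        rw [le_div_iff₀ (by linarith)]
        exact htop j hj
    rw [le_div_iff₀ (by linarith)] at hy
    rw [hsplit]
    nlinarith [C.w_pos i]

end Core

lemma core_of_BL {n : ℕ} (I : SPInstance n)
    (hsq : ∀ i : Fin n, (I.r i).w = (I.r i).h)
    (d : FQW I) (hord : d.IsOrdered)
    (pos : Fin n → ℝ × ℝ) (hBL : I.IsBL pos) :
    Core I.W (fun i => (I.r i).w) (fun i => (pos i).1) (fun i => (pos i).2) d.F d.F.card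
      (d.F.card + d.Q.card) := by
  obtain ⟨o1, o2, o3, o4⟩ := hord
  have hsepiff : ∀ i j p q, Disjoint (openBox (I.r i) p) (openBox (I.r j) q) ↔
      SqSep p.1 p.2 (I.r i).w q.1 q.2 (I.r j).w := by
    intro i j p q
    rw [openBox_sep (I.w_pos i) (I.h_pos i) (I.w_pos j) (I.h_pos j), SqSep, hsq i, hsq j]
  have hg := greedy_fold (fun i => (I.r i).w) I.W I.W_pos.le d.σ (List.finRange n) ?_ d.F
    rfl I.w_pos
  · obtain ⟨_, g2, g3⟩ := hg
    refine ⟨I.W_pos, I.w_pos, I.w_le_W, fun i => (hBL i).1.1.1, fun i => (hBL i).1.1.2.1,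
      fun i => (hBL i).1.1.2.2, ?_, ?_, o1, g2, ?_, ?_, ?_, ?_, ?_⟩
    · intro i j hij
      rcases lt_or_gt_of_ne hij with h | h
      · exact (hsepiff i j _ _).1 ((hBL j).1.2 i h).symm
      · exact (hsepiff i j _ _).1 ((hBL i).1.2 j h)
    · intro i p q hp hpW hq hs
      exact (hBL i).2 (p, q) ⟨⟨hp, hpW, hq⟩, fun j hj => (hsepiff i j _ _).2 (hs j hj)⟩
    · intro i hi
      have := g3 (d.σ.symm i) (List.mem_finRange _)
      simpa using this (by simpa using hi)
    · intro i j hij hj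
      simp only [hsq]
      exact o3 i j (by exact_mod_cast hij) ((o1 j).1 hj)
    · intro i j hi hij hj
      exact o4 i j hi (by exact_mod_cast hij) hj
    · intro i hi hib
      have : i ∈ d.Q := (o2 i).2 ⟨not_lt.1 (mt (o1 i).2 hi), hib⟩
      simp only [FQW.Q, Finset.mem_filter] at this
      exact not_lt.1 this.2.2
    · intro i hi hib
      by_contra hc
      have : i ∈ d.Q := by
        simp only [FQW.Q, Finset.mem_filter]
        exact ⟨Finset.mem_univ _, hi, hc⟩
      exact hib ((o2 i).1 this).2
  · refine (List.pairwise_le_finRange n).imp ?_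
    intro k k' h
    simp only [hsq]
    exact d.sorted k k' h

/-- **Theorem (square case).** If all rectangles of an FQW-ordered Strip
Packing instance are squares, then the height of the Bottom-Left packing is at
most twice the optimum height. -/
theorem bl_fqw_squares_two_approx {n : ℕ} (I : SPInstance n)
    (hsq : ∀ i : Fin n, (I.r i).w = (I.r i).h)
    (d : FQW I) (hord : d.IsOrdered)
    (pos : Fin n → ℝ × ℝ) (hBL : I.IsBL pos) :
    I.height pos ≤ 2 * I.hOPT := by
  have C := core_of_BL I hsq d hord pos hBL
  have hfeas : I.Feasible pos := by
    refine ⟨fun i => (hBL i).1.1, ?_⟩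
    intro i j hij
    rcases lt_or_gt_of_ne hij with h | h
    · exact ((hBL j).1.2 i h).symm
    · exact (hBL i).1.2 j h
  suffices hkey : I.height pos / 2 ≤ I.hOPT by linarith
  refine le_csInf ⟨_, pos, hfeas, rfl⟩ ?_
  rintro H ⟨pos', ⟨hin, hdis⟩, rfl⟩
  rcases isEmpty_or_nonempty (Fin n) with he | hne
  · simp [SPInstance.height, Real.iSup_of_isEmpty]
  suffices hk : I.height pos ≤ 2 * I.height pos' by linarith
  have hH : ∀ i, (pos' i).2 + (I.r i).h ≤ I.height pos' := fun i =>
    le_ciSup (f := fun i => (pos' i).2 + (I.r i).h) (Set.finite_range _).bddAbove i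
  have hH0 : 0 ≤ I.height pos' := by
    obtain ⟨i⟩ := hne
    have := hH i
    have := (hin i).2.2
    have := I.h_pos i
    linarith
  have harea := area_le (fun i => (pos' i).1) (fun i => (pos' i).2) (fun i => (I.r i).w) I.W
    (I.height pos') I.W_pos.le hH0 I.w_pos (fun i => (hin i).1) (fun i => (hin i).2.1)
    (fun i => (hin i).2.2) (fun i => by simpa only [hsq] using hH i) (by
      intro i j hij
      have := (openBox_sep (I.w_pos i) (I.h_pos i) (I.w_pos j) (I.h_pos j)).1 (hdis hij)
      simpa only [SqSep, hsq] using this)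
  refine ciSup_le fun i => ?_
  by_cases hi : i ∈ d.F
  · have h1 := (C.F_pos i hi).1
    rw [h1]
    have := hH i
    have := (hin i).2.2
    linarith
  · have h1 := C.all_area i hi
    have h2 : ∑ k ∈ Finset.Iic i, (I.r k).w * (I.r k).w ≤ ∑ k, (I.r k).w * (I.r k).w :=
      Finset.sum_le_sum_of_subset_of_nonneg (Finset.subset_univ _)
        fun k _ _ => (mul_pos (I.w_pos k) (I.w_pos k)).le
    rw [hsq i] at h1
    have h3 : ((pos i).2 + (I.r i).h) * (I.W / 2) ≤ (2 * I.height pos') * (I.W / 2) := by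
      linarith
    exact le_of_mul_le_mul_right h3 (by linarith [I.W_pos])
end
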